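/- arXiv:2507.06143 — 9 statements merged into one kernel-verified Lean document; each statement's English description precedes it below -/
import Mathlib

section
/- Let X be a real Banach space. If X has the Daugavet property, then for every x in the unit sphere S_X, every continuous linear functional f on X with ‖f‖ = 1, every α > 0 and every ε > 0, there exists y in the closed unit ball B_X such that f(y) > 1 − α and ‖x + y‖ > 2 − ε. (In other words, for every x ∈ S_X and every slice S of B_X, sup_{y ∈ S} ‖x + y‖ = 2.) -/
/-!
The operator `T z = z + f z • x` has norm `2`, so some `y` in the unit ball satisfies
`‖y + f y • x‖ > 2 - δ`, and `f y ≥ 0` up to replacing `y` by `-y`. The triangle inequality then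
forces `f y > 1 - δ`, and replacing `f y • x` by `x` costs at most `1 - f y < δ`, so that
`‖x + y‖ > 2 - 2 * δ`.
-/

/-- If a real Banach space `X` has the Daugavet property, then for every `x`
in the unit sphere, every norm-one functional `f`, every `α > 0` and `ε > 0`, there is `y`
in the closed unit ball with `f y > 1 - α` and `‖x + y‖ > 2 - ε`. -/
theorem daugavet_implies_slice_characterization
    {X : Type*} [NormedAddCommGroup X] [NormedSpace ℝ X] [CompleteSpace X]
    (hDP : ∀ (f : X →L[ℝ] ℝ) (y₀ : X),
      ‖ContinuousLinearMap.id ℝ X + f.smulRight y₀‖ = 1 + ‖f‖ * ‖y₀‖) :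
    ∀ (x : X), ‖x‖ = 1 →
      ∀ (f : X →L[ℝ] ℝ), ‖f‖ = 1 →
        ∀ α > (0 : ℝ), ∀ ε > (0 : ℝ),
          ∃ y : X, ‖y‖ ≤ 1 ∧ f y > 1 - α ∧ ‖x + y‖ > 2 - ε := by
  intro x hx f hf α hα ε hε
  obtain ⟨δ, hδ, hδα, hδε⟩ : ∃ δ > 0, δ ≤ α ∧ 2 * δ ≤ ε :=
    ⟨min α (ε / 2), by positivity, min_le_left _ _, by linarith [min_le_right α (ε / 2)]⟩
  have hT : 2 - δ < ‖ContinuousLinearMap.id ℝ X + f.smulRight x‖ := by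
    rw [hDP, hx, hf]
    linarith
  obtain ⟨z, hz, hzT⟩ := ContinuousLinearMap.exists_lt_apply_of_lt_opNorm _ hT
  -- `z ↦ z + f z • x` is odd, so `f y ≥ 0` may be assumed.
  obtain ⟨y, hy, hfy, hyT⟩ : ∃ y : X, ‖y‖ ≤ 1 ∧ 0 ≤ f y ∧ 2 - δ < ‖y + f y • x‖ := by
    rcases le_total 0 (f z) with h | h
    · exact ⟨z, hz.le, h, by simpa using hzT⟩
    · refine ⟨-z, by simpa using hz.le, by simpa using h, ?_⟩
      rw [← norm_neg]
      simpa [add_comm] using hzT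
  have hfx : ‖f y • x‖ = f y := by rw [norm_smul, hx, mul_one, Real.norm_of_nonneg hfy]
  have hfy_lt : 1 - δ < f y := by linarith [norm_add_le y (f y • x)]
  have hfy_le : f y ≤ 1 := by
    have h := f.le_opNorm y
    rw [hf, one_mul, Real.norm_of_nonneg hfy] at h
    exact h.trans hy
  have hdiff : ‖(1 - f y) • x‖ = 1 - f y := by
    rw [norm_smul, hx, mul_one, Real.norm_of_nonneg (by linarith)]
  have hsub : y + f y • x = (x + y) - (1 - f y) • x := by
    rw [sub_smul, one_smul]
    abel
  have htri := norm_sub_le (x + y) ((1 - f y) • x)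
  rw [← hsub, hdiff] at htri
  exact ⟨y, hy, by linarith, by linarith⟩
end

section
/- (Shvidkoy's Lemma) Let X be a real Banach space with the Daugavet property. Then for every x ∈ S_X and every ε > 0, the set {y ∈ B_X : ‖x + y‖ > 2 − ε} is weakly dense in B_X; that is, for every y ∈ B_X, every finite family f₁, …, f_n of continuous linear functionals on X and every δ > 0, there exists z ∈ B_X such that ‖x + z‖ > 2 − ε and |f_i(z) − f_i(y)| < δ for every i ∈ {1, …, n}. -/
/-!
The proof avoids Krein–Milman and works with finite-dimensional images of the unit ball.

*Slices.* If `‖f‖ = 1`, `c < 1` and `u : X`, then the slice `{z ∈ B_X : c < f z}` contains a slice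
all of whose points satisfy `‖u‖ + 1 - ε < ‖u + z‖` (`exists_subslice`). Indeed
`‖Id + f ⊗ u‖ = 1 + ‖u‖` yields a norming functional `g` for which `h = g + g(u) f` has norm almost
`1 + ‖u‖`; where `h` is that large, `g(z)`, `g(u)` and `f(z)` are all nearly maximal. Iterating, every
slice has a point that is good for finitely many vectors `u` at once
(`exists_mem_slice_forall_finset`).

*Finite-dimensional images.* Let `F = (f₁, …, fₙ) : X → ℝⁿ`, and let `C` be the set of points that
lie, for every `u`, in the closure of `F {z ∈ B_X : ‖u‖ + 1 - ε < ‖u + z‖}`. It is closed, and it is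
convex because the lower bound on the norm can be applied successively to `u` and `u + a z₁`.
If some `F y` with `y ∈ B_X` were outside `C`, a functional `φ` would strictly separate it from `C`;
the slice of `B_X` cut out by `φ ∘ F` has points good for any finitely many `u`, so by compactness
it gives a point of `C` on the wrong side. Hence `F y ∈ C`, and taking `u = x` proves the claim.
-/

/-- A slice of the unit ball contains a slice on which `‖u + z‖` is almost `‖u‖ + 1`. -/
lemma exists_subslice {X : Type*} [NormedAddCommGroup X] [NormedSpace ℝ X]
    (hDP : ∀ (f : X →L[ℝ] ℝ) (y₀ : X),
      ‖ContinuousLinearMap.id ℝ X + f.smulRight y₀‖ = 1 + ‖f‖ * ‖y₀‖)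
    {ε : ℝ} (hε : 0 < ε) (u : X) (f : X →L[ℝ] ℝ) (hf : ‖f‖ = 1) (c : ℝ) (hc : c < 1) :
    ∃ (h : X →L[ℝ] ℝ) (c' : ℝ), ‖h‖ = 1 ∧ c' < 1 ∧
      ∀ z : X, ‖z‖ ≤ 1 → c' < h z → c < f z ∧ ‖u‖ + 1 - ε < ‖u + z‖ := by
  have hle : ∀ (g : X →L[ℝ] ℝ), ‖g‖ ≤ 1 → ∀ z, g z ≤ ‖z‖ := fun g hg z ↦
    (le_abs_self _).trans ((g.le_opNorm z).trans
      (mul_le_of_le_one_left (norm_nonneg _) hg))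
  by_cases hu : u = 0
  · refine ⟨f, max c (1 - ε), hf, max_lt hc (by linarith), fun z hz hcz ↦ ?_⟩
    have h1 := hle f hf.le z
    have h2 := max_lt_iff.1 hcz
    subst hu
    simp only [norm_zero, zero_add]
    exact ⟨h2.1, by linarith⟩
  have hu0 : 0 < ‖u‖ := norm_pos_iff.2 hu
  -- Negative thresholds are replaced by `0`, so that products with `g u ≥ 0` stay monotone.
  set d := max c 0 with hd
  have hd1 : d < 1 := max_lt hc one_pos
  have hd0 : 0 ≤ d := le_max_right _ _
  obtain ⟨η, hη0, hη⟩ : ∃ η : ℝ, 0 < η ∧ η < min (min (ε / 2) 1) (‖u‖ * (1 - d)) :=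
    exists_between (by
      have : 0 < ‖u‖ * (1 - d) := mul_pos hu0 (by linarith)
      simp [this, hε])
  simp only [lt_min_iff] at hη
  obtain ⟨⟨hη1, hη2⟩, hη3⟩ := hη
  -- An almost norm-attaining point of `Id + f ⊗ u`, and a functional norming its image.
  have hT := hDP f u
  rw [hf, one_mul] at hT
  obtain ⟨y, hy, hyT⟩ := ContinuousLinearMap.exists_lt_apply_of_lt_opNorm
    (ContinuousLinearMap.id ℝ X + f.smulRight u) (r := 1 + ‖u‖ - η) (by linarith)
  obtain ⟨g, hg, hgy⟩ := exists_dual_vector'' ℝ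
    ((ContinuousLinearMap.id ℝ X + f.smulRight u) y)
  have hgy' : 1 + ‖u‖ - η < g y + g u * f y := by
    have : g y + g u * f y = ‖(ContinuousLinearMap.id ℝ X + f.smulRight u) y‖ := by
      have h3 : g ((ContinuousLinearMap.id ℝ X + f.smulRight u) y) = _ := hgy
      rw [RCLike.ofReal_real_eq_id, id] at h3
      rw [← h3]
      simp [mul_comm]
    linarith
  -- Changing the signs of `g` and `y` simultaneously, we may assume `0 ≤ g u`.
  obtain ⟨g, y, hg, hy, hgu, hgy⟩ : ∃ (g : X →L[ℝ] ℝ) (y : X), ‖g‖ ≤ 1 ∧ ‖y‖ < 1 ∧ 0 ≤ g u ∧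
      1 + ‖u‖ - η < g y + g u * f y := by
    rcases le_total 0 (g u) with h0 | h0
    · exact ⟨g, y, hg, hy, h0, hgy'⟩
    · exact ⟨-g, -y, by simpa using hg, by simpa using hy, by simpa using h0, by simpa using hgy'⟩
  set h : X →L[ℝ] ℝ := g + g u • f with hh
  have happ : ∀ z, h z = g z + g u * f z := fun z ↦ by simp [hh]
  have hbig : 1 + ‖u‖ - η < ‖h‖ := by
    have h1 := (le_abs_self _).trans (h.le_opNorm y)
    have h2 := mul_le_of_le_one_right (norm_nonneg h) hy.le
    rw [happ] at h1
    linarith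
  have hpos : 0 < ‖h‖ := by linarith
  refine ⟨‖h‖⁻¹ • h, ‖h‖⁻¹ * (1 + ‖u‖ - η), ?_, ?_, fun z hz hcz ↦ ?_⟩
  · rw [norm_smul, norm_inv, norm_norm, inv_mul_cancel₀ hpos.ne']
  · rw [inv_mul_lt_iff₀ hpos]; linarith
  · have h1 : 1 + ‖u‖ - η < g z + g u * f z := by
      rw [← happ]
      exact lt_of_mul_lt_mul_left hcz (inv_nonneg.2 hpos.le)
    have h2 : g z ≤ 1 := (hle g hg z).trans hz
    have h3 : f z ≤ 1 := (hle f hf.le z).trans hz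
    have h4 : g u ≤ ‖u‖ := hle g hg u
    have h5 : g u * f z ≤ g u := mul_le_of_le_one_right hgu h3
    have h6 : g (u + z) ≤ ‖u + z‖ := hle g hg _
    rw [map_add] at h6
    refine ⟨?_, by linarith⟩
    by_contra! hcon
    have h7 : g u * f z ≤ g u * d :=
      mul_le_mul_of_nonneg_left (hcon.trans (le_max_left _ _)) hgu
    have h8 : g u * d ≤ ‖u‖ * d := mul_le_mul_of_nonneg_right h4 hd0
    linarith

lemma exists_mem_slice_forall_finset {X : Type*} [NormedAddCommGroup X] [NormedSpace ℝ X]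
    (hDP : ∀ (f : X →L[ℝ] ℝ) (y₀ : X),
      ‖ContinuousLinearMap.id ℝ X + f.smulRight y₀‖ = 1 + ‖f‖ * ‖y₀‖)
    {ε : ℝ} (hε : 0 < ε) (s : Finset X) (f : X →L[ℝ] ℝ) (hf : ‖f‖ = 1) (c : ℝ) (hc : c < 1) :
    ∃ z : X, ‖z‖ ≤ 1 ∧ c < f z ∧ ∀ u ∈ s, ‖u‖ + 1 - ε < ‖u + z‖ := by
  classical
  induction s using Finset.induction_on generalizing f c with
  | empty =>
    obtain ⟨y, hy, hyf⟩ := ContinuousLinearMap.exists_lt_apply_of_lt_opNorm f (hc.trans_eq hf.symm)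
    rcases le_total 0 (f y) with h0 | h0
    · exact ⟨y, hy.le, by rwa [Real.norm_of_nonneg h0] at hyf, by simp⟩
    · exact ⟨-y, by simpa using hy.le, by rwa [Real.norm_of_nonpos h0, ← map_neg] at hyf, by simp⟩
  | insert u s _ ih =>
    obtain ⟨h, c', hh, hc', H⟩ := exists_subslice hDP hε u f hf c hc
    obtain ⟨z, hz, hcz, hs⟩ := ih h hh c' hc'
    obtain ⟨h1, h2⟩ := H z hz hcz
    exact ⟨z, hz, h1, by simpa [h2] using hs⟩

/-- The points of `ℝⁿ` which, for every `u`, are limits of images under `F` of vectors `z` of the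
unit ball with `‖u‖ + 1 - ε < ‖u + z‖`. The vectors `z` may depend on `u`. -/
def goodLimits {X : Type*} [NormedAddCommGroup X] [NormedSpace ℝ X] {n : ℕ}
    (F : X →L[ℝ] (Fin n → ℝ)) (ε : ℝ) : Set (Fin n → ℝ) :=
  ⋂ u : X, closure (F '' {z | ‖z‖ ≤ 1 ∧ ‖u‖ + 1 - ε < ‖u + z‖})

lemma isClosed_goodLimits {X : Type*} [NormedAddCommGroup X] [NormedSpace ℝ X] {n : ℕ}
    (F : X →L[ℝ] (Fin n → ℝ)) (ε : ℝ) : IsClosed (goodLimits F ε) :=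
  isClosed_iInter fun _ ↦ isClosed_closure

/-- Given approximants for `p` and `q`, the one for `q` being chosen relative to the vector
`u + a z₁` with `z₁` the approximant for `p`, the norm estimates add up. -/
lemma convex_goodLimits {X : Type*} [NormedAddCommGroup X] [NormedSpace ℝ X] {n : ℕ}
    (F : X →L[ℝ] (Fin n → ℝ)) (ε : ℝ) : Convex ℝ (goodLimits F ε) := by
  -- The estimate defining `goodLimits` is homogeneous, so `z` may carry a positive weight `a`.
  have key : ∀ p ∈ goodLimits F ε, ∀ (u : X) (a : ℝ), 0 < a → ∀ r > (0 : ℝ),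
      ∃ z : X, ‖z‖ ≤ 1 ∧ ‖u‖ + a * (1 - ε) < ‖u + a • z‖ ∧ dist p (F z) < r := by
    intro p hp u a ha r hr
    obtain ⟨_, ⟨z, ⟨hz, hz2⟩, rfl⟩, hd⟩ :=
      Metric.mem_closure_iff.1 (Set.mem_iInter.1 hp (a⁻¹ • u)) r hr
    refine ⟨z, hz, ?_, hd⟩
    have h1 : u + a • z = a • (a⁻¹ • u + z) := by rw [smul_add, smul_inv_smul₀ ha.ne']
    have h2 : ‖u‖ = a * ‖a⁻¹ • u‖ := by
      rw [norm_smul, norm_inv, Real.norm_of_nonneg ha.le, mul_inv_cancel_left₀ ha.ne']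
    rw [h1, norm_smul, Real.norm_of_nonneg ha.le, h2]
    have := mul_lt_mul_of_pos_left hz2 ha
    linarith
  rw [convex_iff_forall_pos]
  intro p hp q hq a b ha hb hab
  refine Set.mem_iInter.2 fun u ↦ Metric.mem_closure_iff.2 fun r hr ↦ ?_
  obtain ⟨z, hz, hz2, hz3⟩ := key p hp u a ha r hr
  obtain ⟨w, hw, hw2, hw3⟩ := key q hq (u + a • z) b hb r hr
  refine ⟨_, ⟨a • z + b • w, ⟨?_, ?_⟩, rfl⟩, ?_⟩
  · have := convex_closedBall (0 : X) 1 (mem_closedBall_zero_iff.2 hz)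
      (mem_closedBall_zero_iff.2 hw) ha.le hb.le hab
    exact mem_closedBall_zero_iff.1 this
  · have h1 : a * (1 - ε) + b * (1 - ε) = 1 - ε := by rw [← add_mul, hab, one_mul]
    rw [← add_assoc]
    linarith
  · rw [map_add, map_smul, map_smul]
    rw [dist_eq_norm] at hz3 hw3
    have hp' : p - F z ∈ Metric.ball (0 : Fin n → ℝ) r := mem_ball_zero_iff.2 hz3
    have hq' : q - F w ∈ Metric.ball (0 : Fin n → ℝ) r := mem_ball_zero_iff.2 hw3
    have := mem_ball_zero_iff.1 (convex_ball (0 : Fin n → ℝ) r hp' hq' ha.le hb.le hab)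
    have heq : a • p + b • q - (a • F z + b • F w) = a • (p - F z) + b • (q - F w) := by module
    rw [dist_eq_norm, heq]
    exact this

/-- In the presence of the Daugavet property the whole image of the unit ball consists of
good limits. -/
lemma map_mem_goodLimits {X : Type*} [NormedAddCommGroup X] [NormedSpace ℝ X]
    (hDP : ∀ (f : X →L[ℝ] ℝ) (y₀ : X),
      ‖ContinuousLinearMap.id ℝ X + f.smulRight y₀‖ = 1 + ‖f‖ * ‖y₀‖)
    {ε : ℝ} (hε : 0 < ε) {n : ℕ} (F : X →L[ℝ] (Fin n → ℝ)) (y : X) (hy : ‖y‖ ≤ 1) :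
    F y ∈ goodLimits F ε := by
  classical
  by_contra hcon
  obtain ⟨φ, s, hφ, hs⟩ := geometric_hahn_banach_closed_point (convex_goodLimits F ε)
    (isClosed_goodLimits F ε) hcon
  have hfin : ∀ t : Finset X, ∃ z : X, ‖z‖ ≤ 1 ∧ s < φ (F z) ∧
      ∀ u ∈ t, ‖u‖ + 1 - ε < ‖u + z‖ := by
    intro t
    set f : X →L[ℝ] ℝ := φ.comp F with hf
    have hsf : s < f y := hs
    by_cases hf0 : f = 0
    · -- Here `s < 0`, so that any slice will do; `X ≠ 0` because `‖Id‖ = 1`.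
      have hs0 : s < 0 := by simpa [hf0] using hsf
      have : Nontrivial X := by
        by_contra hX
        rw [not_nontrivial_iff_subsingleton] at hX
        have h1 := hDP 0 0
        have h2 : ContinuousLinearMap.id ℝ X + (0 : X →L[ℝ] ℝ).smulRight (0 : X) = 0 :=
          Subsingleton.elim _ _
        rw [h2] at h1
        simp at h1
      obtain ⟨f', hf', -⟩ := exists_dual_vector' ℝ (0 : X)
      obtain ⟨z, hz, -, hzt⟩ := exists_mem_slice_forall_finset hDP hε t f' hf' 0 one_pos
      refine ⟨z, hz, ?_, hzt⟩
      have : φ (F z) = f z := rfl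
      rw [this, hf0]
      exact hs0
    · have hpos : 0 < ‖f‖ := norm_pos_iff.2 hf0
      obtain ⟨z, hz, hsz, hzt⟩ := exists_mem_slice_forall_finset hDP hε t (‖f‖⁻¹ • f)
        (by rw [norm_smul, norm_inv, norm_norm, inv_mul_cancel₀ hpos.ne']) (‖f‖⁻¹ * s) (by
          rw [inv_mul_lt_iff₀ hpos, mul_one]
          exact hsf.trans_le ((le_abs_self _).trans ((f.le_opNorm y).trans
            (mul_le_of_le_one_right hpos.le hy))))
      exact ⟨z, hz, lt_of_mul_lt_mul_left hsz (inv_nonneg.2 hpos.le), hzt⟩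
  -- By compactness, one point works for all `u` simultaneously.
  obtain ⟨p, -, hp⟩ := (isCompact_closedBall (0 : Fin n → ℝ) ‖F‖).inter_iInter_nonempty
    (fun u : X ↦ closure (F '' {z | (‖z‖ ≤ 1 ∧ ‖u‖ + 1 - ε < ‖u + z‖) ∧ s < φ (F z)}))
    (fun _ ↦ isClosed_closure) (fun t ↦ by
      obtain ⟨z, hz, hsz, hzt⟩ := hfin t
      refine ⟨F z, mem_closedBall_zero_iff.2 ((F.le_opNorm z).trans
        (mul_le_of_le_one_right (norm_nonneg _) hz)), Set.mem_iInter₂.2 fun u hu ↦ ?_⟩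
      exact subset_closure ⟨z, ⟨⟨hz, hzt u hu⟩, hsz⟩, rfl⟩)
  rw [Set.mem_iInter] at hp
  have hpC : p ∈ goodLimits F ε := Set.mem_iInter.2 fun u ↦
    closure_mono (Set.image_mono fun z hz ↦ hz.1) (hp u)
  have hps : s ≤ φ p := by
    have hcl : IsClosed {q : Fin n → ℝ | s ≤ φ q} := isClosed_le continuous_const φ.continuous
    refine closure_minimal ?_ hcl (hp 0)
    rintro _ ⟨z, hz, rfl⟩
    exact hz.2.le
  exact (hφ p hpC).not_ge hps

/-- Shvidkoy's Lemma: If a real Banach space `X` has the Daugavet property,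
then for every `x ∈ S_X` and `ε > 0`, the set `{y ∈ B_X : ‖x + y‖ > 2 - ε}` is weakly
dense in `B_X`. -/
theorem shvidkoy_lemma
    {X : Type*} [NormedAddCommGroup X] [NormedSpace ℝ X] [CompleteSpace X]
    (hDP : ∀ (f : X →L[ℝ] ℝ) (y₀ : X),
      ‖ContinuousLinearMap.id ℝ X + f.smulRight y₀‖ = 1 + ‖f‖ * ‖y₀‖) :
    ∀ (x : X), ‖x‖ = 1 → ∀ ε > (0 : ℝ),
      ∀ (y : X), ‖y‖ ≤ 1 →
        ∀ (n : ℕ) (f : Fin n → (X →L[ℝ] ℝ)), ∀ δ > (0 : ℝ),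
          ∃ z : X, ‖z‖ ≤ 1 ∧ ‖x + z‖ > 2 - ε ∧
            ∀ i : Fin n, |f i z - f i y| < δ := by
  intro x hx ε hε y hy n f δ hδ
  have h := map_mem_goodLimits hDP hε (ContinuousLinearMap.pi f) y hy
  obtain ⟨_, ⟨z, ⟨hz, hxz⟩, rfl⟩, hd⟩ := Metric.mem_closure_iff.1 (Set.mem_iInter.1 h x) δ hδ
  refine ⟨z, hz, by linarith, fun i ↦ ?_⟩
  rw [dist_comm] at hd
  exact (dist_le_pi_dist _ _ i).trans_lt hd
end

section
/- (Main Theorem, polynomial Shvidkoy lemma) Let X be a real Banach space with the Daugavet property. Then for every x ∈ S_X and every ε > 0, the set {y ∈ B_X : ‖x + y‖ > 2 − ε} is dense in B_X for the weak polynomial topology; that is, for every y ∈ B_X, every finite family p₁, …, p_k of continuous scalar polynomials on X, and every δ > 0, there exists z ∈ B_X such that ‖x + z‖ > 2 − ε and |p_i(z) − p_i(y)| < δ for every i ∈ {1, …, k}. -/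
/-!
Averaging turns statements about single functionals into statements about polynomials.

The Daugavet equation for `f ⊗ s` says that every slice of the unit ball contains points `z` with
`‖s + z‖` almost `‖s‖ + 1` (`exists_mem_slice`). Choosing such points one after the other produces
`u 0, …, u (n - 1)` in the ball with `‖x + ∑ u i‖` almost `n + 1` (`exists_seq`), and the triangle
inequality then makes `‖x + (1/n) ∑ u i‖` almost `2` (`norm_add_average`). The choice of each `u k`
may depend on the preceding ones, and this freedom is used twice.

* Weak topology (`exists_weak_close`). Given functionals `φ a`, let `d k` be the vector with
  coordinates `∑_{i<k} (φ a (u i) - φ a y)`. Choosing `u k` in a slice on which the inner product of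
  `d k` with `(φ a (u k) - φ a y)_a` is at most `1` gives `‖d n‖² = O(n)`, so the average of the
  `u i` is weakly close to `y`. This is the argument of Blackwell's approachability theorem.
* Polynomials (`exists_multilinear_close`). Choose `u k` weakly close to `y` for all functionals
  obtained from the given multilinear forms by freezing all slots but one at `y` or at earlier
  points. Then `F (u (σ 1), …, u (σ m))` is close to `F (y, …, y)` for every injective `σ`, as the
  points can be replaced by `y` one at a time, the latest first. In the expansion of
  `F (z, …, z)`, with `z` the average, the non-injective `σ` carry a proportion at most `m² / n`.
-/

/-- A continuous scalar polynomial on a real normed space `X`: a function of the form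
`p x = c + ∑_{n=1}^{N} F n (x, …, x)` where each `F n` is a continuous `n`-linear form. -/
def IsScalarPoly {X : Type*} [NormedAddCommGroup X] [NormedSpace ℝ X] (p : X → ℝ) : Prop :=
  ∃ (N : ℕ) (c : ℝ) (F : (n : ℕ) → ContinuousMultilinearMap ℝ (fun _ : Fin n => X) ℝ),
    ∀ x : X, p x = c + ∑ n ∈ Finset.Icc 1 N, F n (fun _ => x)

section Shvidkoy

variable {X : Type*} [NormedAddCommGroup X] [NormedSpace ℝ X]

/-- The Daugavet property of `X`, in the form of the Daugavet equation for rank-one operators. -/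
def HasDaugavet (X : Type*) [NormedAddCommGroup X] [NormedSpace ℝ X] : Prop :=
  ∀ (f : X →L[ℝ] ℝ) (y₀ : X),
    ‖ContinuousLinearMap.id ℝ X + f.smulRight y₀‖ = 1 + ‖f‖ * ‖y₀‖

/-- The case of a norm-one functional in `exists_mem_slice`. -/
lemma exists_mem_slice_of_norm_one (hDP : HasDaugavet X) (f : X →L[ℝ] ℝ) (hf : ‖f‖ = 1) (s : X)
    (hs : 1 ≤ ‖s‖) {ε : ℝ} (hε : 0 < ε) :
    ∃ z : X, ‖z‖ ≤ 1 ∧ ‖s‖ + 1 - 2 * ε ≤ ‖s + z‖ ∧ 1 - ε ≤ f z := by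
  have key : ∃ z : X, ‖z‖ ≤ 1 ∧ 0 ≤ f z ∧ 1 + ‖s‖ - ε ≤ ‖z + f z • s‖ := by
    by_contra! hcon
    -- The operator is odd, so a bound on the half ball `0 ≤ f z` is a bound on the whole ball.
    have hall : ∀ z : X, ‖z‖ ≤ 1 → ‖z + f z • s‖ ≤ max 0 (1 + ‖s‖ - ε) := by
      intro z hz
      rcases le_total 0 (f z) with h | h
      · exact (hcon z hz h).le.trans (le_max_right _ _)
      · have := hcon (-z) (by simpa using hz) (by simpa using h)
        rw [map_neg, neg_smul, ← neg_add, norm_neg] at this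
        exact this.le.trans (le_max_right _ _)
    have hle : ‖ContinuousLinearMap.id ℝ X + f.smulRight s‖ ≤ max 0 (1 + ‖s‖ - ε) := by
      refine ContinuousLinearMap.opNorm_le_of_unit_norm (le_max_left _ _) ?_
      intro z hz
      simpa using hall z hz.le
    rw [hDP f s, hf] at hle
    rcases le_max_iff.1 hle with h | h <;> linarith
  obtain ⟨z, hz, hfz, hzs⟩ := key
  have hfz1 : f z ≤ 1 := by
    have := (le_abs_self _).trans (f.le_opNorm z)
    rw [hf] at this
    linarith
  have h1 : ‖z + f z • s‖ ≤ ‖z‖ + f z * ‖s‖ := by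
    refine (norm_add_le _ _).trans ?_
    rw [norm_smul, Real.norm_of_nonneg hfz]
  have h2 : ‖z + f z • s‖ ≤ ‖s + z‖ + (1 - f z) * ‖s‖ := by
    have : z + f z • s = (s + z) - (1 - f z) • s := by module
    rw [this]
    refine (norm_sub_le _ _).trans ?_
    rw [norm_smul, Real.norm_of_nonneg (by linarith)]
  refine ⟨z, hz, by nlinarith, by nlinarith⟩

/-- Every slice of the unit ball contains points `z` for which `‖s + z‖` is almost `‖s‖ + 1`. -/
lemma exists_mem_slice (hDP : HasDaugavet X) (g : X →L[ℝ] ℝ) (s : X)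
    (hs : 1 ≤ ‖s‖) {ε c : ℝ} (hε : 0 < ε) (hc : 0 < c) :
    ∃ z : X, ‖z‖ ≤ 1 ∧ ‖s‖ + 1 - ε ≤ ‖s + z‖ ∧ ‖g‖ - c ≤ g z := by
  have hs0 : 0 < ‖s‖ := by linarith
  by_cases hg : g = 0
  · refine ⟨‖s‖⁻¹ • s, ?_, ?_, ?_⟩
    · rw [norm_smul, norm_inv, norm_norm, inv_mul_cancel₀ hs0.ne']
    · have : s + ‖s‖⁻¹ • s = (1 + ‖s‖⁻¹) • s := by module
      rw [this, norm_smul, Real.norm_of_nonneg (by positivity), add_mul, inv_mul_cancel₀ hs0.ne']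
      linarith
    · simp [hg, hc.le]
  · have hg0 : 0 < ‖g‖ := norm_pos_iff.2 hg
    obtain ⟨z, hz, hsz, hfz⟩ := exists_mem_slice_of_norm_one hDP (‖g‖⁻¹ • g)
      (by rw [norm_smul, norm_inv, norm_norm, inv_mul_cancel₀ hg0.ne']) s hs
      (ε := min (ε / 2) (c / ‖g‖)) (lt_min (by positivity) (by positivity))
    refine ⟨z, hz, ?_, ?_⟩
    · have := min_le_left (ε / 2) (c / ‖g‖)
      linarith
    · have h1 := min_le_right (ε / 2) (c / ‖g‖)
      have h2 : 1 - c / ‖g‖ ≤ ‖g‖⁻¹ * g z := by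
        simp only [smul_apply, smul_eq_mul] at hfz
        linarith
      have h3 := mul_le_mul_of_nonneg_left h2 hg0.le
      rwa [mul_inv_cancel_left₀ hg0.ne', mul_sub, mul_one, mul_div_cancel₀ _ hg0.ne'] at h3

/-- Successive choice of points of the ball whose norms add up almost exactly. The predicate
`C u k` is the constraint imposed on the `k`-th point; it depends only on `u 0, …, u (k - 1)`. -/
lemma exists_seq (C : (ℕ → X) → ℕ → X → Prop)
    (hC : ∀ u v k z, (∀ i < k, u i = v i) → C u k z → C v k z)
    (hstep : ∀ u k, (∀ i < k, ‖u i‖ ≤ 1) → ∀ s : X, 1 ≤ ‖s‖ → ∀ ε > (0 : ℝ),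
      ∃ z : X, ‖z‖ ≤ 1 ∧ ‖s‖ + 1 - ε ≤ ‖s + z‖ ∧ C u k z)
    (x : X) (hx : ‖x‖ = 1) {ε : ℝ} (hε : 0 < ε) (hε1 : ε ≤ 1) (n : ℕ) :
    ∃ u : ℕ → X, (∀ k < n, ‖u k‖ ≤ 1) ∧ (∀ k < n, C u k (u k)) ∧
      (n : ℝ) + 1 - n * ε ≤ ‖x + ∑ i ∈ Finset.range n, u i‖ := by
  induction n with
  | zero => exact ⟨fun _ => 0, by simp, by simp, by simp [hx]⟩
  | succ n ih =>
    obtain ⟨u, hu, hCu, hn⟩ := ih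
    have hs : 1 ≤ ‖x + ∑ i ∈ Finset.range n, u i‖ := by
      have : (n : ℝ) * ε ≤ n := mul_le_of_le_one_right n.cast_nonneg hε1
      linarith
    obtain ⟨z, hz, hsz, hCz⟩ := hstep u n hu _ hs ε hε
    have hne : ∀ i < n, Function.update u n z i = u i := fun i hi =>
      Function.update_of_ne hi.ne _ _
    refine ⟨Function.update u n z, ?_, ?_, ?_⟩
    · intro k hk
      rcases Nat.lt_succ_iff_lt_or_eq.1 hk with h | rfl
      · rw [hne k h]; exact hu k h
      · simpa using hz
    · intro k hk
      rcases Nat.lt_succ_iff_lt_or_eq.1 hk with h | rfl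
      · rw [hne k h]
        exact hC u _ k _ (fun i hi => (hne i (hi.trans h)).symm) (hCu k h)
      · rw [Function.update_self]
        exact hC u _ k _ (fun i hi => (hne i hi).symm) hCz
    · rw [Finset.sum_range_succ, Function.update_self,
        Finset.sum_congr rfl (fun i hi => hne i (Finset.mem_range.1 hi)), ← add_assoc]
      push_cast
      linarith

lemma norm_average_le (u : ℕ → X) {n : ℕ} (hn : 0 < n) (hu : ∀ k < n, ‖u k‖ ≤ 1) :
    ‖(n : ℝ)⁻¹ • ∑ i ∈ Finset.range n, u i‖ ≤ 1 := by
  have hn' : (0 : ℝ) < n := by exact_mod_cast hn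
  have hU : ‖∑ i ∈ Finset.range n, u i‖ ≤ n := by
    simpa using norm_sum_le_of_le (Finset.range n) (fun i hi => hu i (Finset.mem_range.1 hi))
  rw [norm_smul, norm_inv, Real.norm_natCast, inv_mul_le_iff₀ hn', mul_one]
  exact hU

lemma norm_add_average (x : X) (u : ℕ → X) {n : ℕ} (hn : 0 < n)
    (hu : ∀ k < n, ‖u k‖ ≤ 1) {η : ℝ}
    (h : (n : ℝ) + 1 - η ≤ ‖x + ∑ i ∈ Finset.range n, u i‖) :
    2 - η ≤ ‖x + (n : ℝ)⁻¹ • ∑ i ∈ Finset.range n, u i‖ := by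
  have hn' : (1 : ℝ) ≤ n := by exact_mod_cast hn
  have hA := norm_average_le u hn hu
  set U := ∑ i ∈ Finset.range n, u i
  have : x + U = (x + (n : ℝ)⁻¹ • U) + ((n : ℝ) - 1) • ((n : ℝ)⁻¹ • U) := by
    rw [sub_smul, smul_inv_smul₀ (by positivity), one_smul]
    abel
  have h2 : ‖x + U‖ ≤ ‖x + (n : ℝ)⁻¹ • U‖ + ((n : ℝ) - 1) * 1 := by
    rw [this]
    refine (norm_add_le _ _).trans ?_
    gcongr
    rw [norm_smul, Real.norm_of_nonneg (by linarith)]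
    gcongr
  linarith

/-- The constraint in the weak case: the new deviation from `y` makes no large positive inner
product with the accumulated one. -/
def WeakStep {κ : Type*} [Fintype κ] (φ : κ → X →L[ℝ] ℝ) (y : X) (u : ℕ → X) (k : ℕ) (z : X) :
    Prop :=
  ∑ a, (∑ i ∈ Finset.range k, (φ a (u i) - φ a y)) * (φ a z - φ a y) ≤ 1

/-- The squared Euclidean norm of the accumulated deviation grows at most linearly. -/
lemma weakStep_bound {κ : Type*} [Fintype κ] (φ : κ → X →L[ℝ] ℝ) (y : X) (hy : ‖y‖ ≤ 1)
    (u : ℕ → X) (n : ℕ) (hu : ∀ k < n, ‖u k‖ ≤ 1) (hC : ∀ k < n, WeakStep φ y u k (u k)) :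
    ∑ a, (∑ i ∈ Finset.range n, (φ a (u i) - φ a y)) ^ 2
      ≤ n * (2 + ∑ a, (2 * ‖φ a‖) ^ 2) := by
  induction n with
  | zero => simp
  | succ n ih =>
    have ih' := ih (fun k hk => hu k (by omega)) (fun k hk => hC k (by omega))
    have h1 := hC n (by omega)
    have h2 : ∑ a, (φ a (u n) - φ a y) ^ 2 ≤ ∑ a, (2 * ‖φ a‖) ^ 2 := by
      refine Finset.sum_le_sum fun a _ => ?_
      rw [← map_sub]
      refine sq_le_sq' ?_ ?_
      all_goals
        have h3 := (φ a).le_opNorm (u n - y)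
        have h4 : ‖u n - y‖ ≤ 2 := (norm_sub_le _ _).trans (by linarith [hu n (by omega)])
        have h5 : ‖φ a‖ * ‖u n - y‖ ≤ 2 * ‖φ a‖ := by nlinarith [norm_nonneg (φ a)]
        rw [Real.norm_eq_abs] at h3
        have := abs_le.1 (h3.trans h5)
        linarith
    have h3 : ∑ a, (∑ i ∈ Finset.range (n + 1), (φ a (u i) - φ a y)) ^ 2
        = ∑ a, (∑ i ∈ Finset.range n, (φ a (u i) - φ a y)) ^ 2
          + 2 * ∑ a, (∑ i ∈ Finset.range n, (φ a (u i) - φ a y)) * (φ a (u n) - φ a y)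
          + ∑ a, (φ a (u n) - φ a y) ^ 2 := by
      rw [Finset.mul_sum, ← Finset.sum_add_distrib, ← Finset.sum_add_distrib]
      refine Finset.sum_congr rfl fun a _ => ?_
      rw [Finset.sum_range_succ]
      ring
    unfold WeakStep at h1
    rw [h3]
    push_cast
    linarith

/-- Shvidkoy's lemma for the weak topology, around a unit vector. -/
lemma exists_weak_close (hDP : HasDaugavet X) {κ : Type*} [Fintype κ] (φ : κ → X →L[ℝ] ℝ)
    (y : X) (hy : ‖y‖ ≤ 1) (x : X) (hx : ‖x‖ = 1) {ε η : ℝ} (hε : 0 < ε) (hη : 0 < η) :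
    ∃ z : X, ‖z‖ ≤ 1 ∧ 2 - ε ≤ ‖x + z‖ ∧ ∀ a, |φ a z - φ a y| ≤ η := by
  set M : ℝ := 2 + ∑ a, (2 * ‖φ a‖) ^ 2 with hM
  obtain ⟨n, hn⟩ := exists_nat_gt (M / η ^ 2)
  have hM0 : 0 < M := by positivity
  have hn' : (0 : ℝ) < n := lt_trans (by positivity) hn
  have hn0 : 0 < n := by exact_mod_cast hn'
  obtain ⟨u, hu, hC, hsum⟩ := exists_seq (WeakStep φ y)
    (by
      intro u v k z huv h
      unfold WeakStep at h ⊢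
      convert h using 5 with a _ i hi
      rw [huv i (Finset.mem_range.1 hi)])
    (by
      intro u k _ s hs ε' hε'
      obtain ⟨z, hz, hsz, hgz⟩ := exists_mem_slice hDP
        (-∑ a, (∑ i ∈ Finset.range k, (φ a (u i) - φ a y)) • φ a) s hs hε' one_pos
      refine ⟨z, hz, hsz, ?_⟩
      have hgy := ((le_abs_self _).trans ((-∑ a, (∑ i ∈ Finset.range k,
        (φ a (u i) - φ a y)) • φ a).le_opNorm y)).trans
        (mul_le_of_le_one_right (norm_nonneg _) hy)
      have h := hgy.trans (sub_le_iff_le_add.1 hgz)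
      simp only [neg_apply, sum_apply,
        smul_apply, smul_eq_mul] at h
      unfold WeakStep
      simp only [mul_sub, Finset.sum_sub_distrib] at h ⊢
      linarith)
    x hx (ε := min 1 (ε / n)) (lt_min one_pos (by positivity)) (min_le_left _ _) n
  refine ⟨_, norm_average_le u hn0 hu, ?_, ?_⟩
  · refine norm_add_average x u hn0 hu (le_trans ?_ hsum)
    have : (n : ℝ) * min 1 (ε / n) ≤ n * (ε / n) := by gcongr; exact min_le_right _ _
    rw [mul_div_cancel₀ _ hn'.ne'] at this
    linarith
  · intro a
    have hb := weakStep_bound φ y hy u n hu hC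
    have ha : (∑ i ∈ Finset.range n, (φ a (u i) - φ a y)) ^ 2 ≤ n * M :=
      (Finset.single_le_sum (f := fun a => (∑ i ∈ Finset.range n, (φ a (u i) - φ a y)) ^ 2)
        (fun a _ => sq_nonneg _) (Finset.mem_univ a)).trans hb
    have hd : ∑ i ∈ Finset.range n, (φ a (u i) - φ a y)
        = n * (φ a ((n : ℝ)⁻¹ • ∑ i ∈ Finset.range n, u i) - φ a y) := by
      rw [map_smul, map_sum, Finset.sum_sub_distrib, smul_eq_mul, mul_sub,
        mul_inv_cancel_left₀ hn'.ne']
      simp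
    rw [hd] at ha
    rw [div_lt_iff₀ (by positivity)] at hn
    refine abs_le_of_sq_le_sq ?_ hη.le
    have h6 : (n : ℝ) ^ 2 * (φ a ((n : ℝ)⁻¹ • ∑ i ∈ Finset.range n, u i) - φ a y) ^ 2
        ≤ (n : ℝ) ^ 2 * η ^ 2 := by nlinarith
    exact le_of_mul_le_mul_left h6 (by positivity)

/-- Shvidkoy's lemma for the weak topology, around a vector of arbitrary norm at least one. -/
lemma exists_weak_close' (hDP : HasDaugavet X) {κ : Type*} [Fintype κ] (φ : κ → X →L[ℝ] ℝ)
    (y : X) (hy : ‖y‖ ≤ 1) (s : X) (hs : 1 ≤ ‖s‖) {ε η : ℝ} (hε : 0 < ε) (hη : 0 < η) :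
    ∃ z : X, ‖z‖ ≤ 1 ∧ ‖s‖ + 1 - ε ≤ ‖s + z‖ ∧ ∀ a, |φ a z - φ a y| ≤ η := by
  have hs0 : 0 < ‖s‖ := by linarith
  obtain ⟨z, hz, hxz, hφ⟩ := exists_weak_close hDP φ y hy (‖s‖⁻¹ • s)
    (by rw [norm_smul, norm_inv, norm_norm, inv_mul_cancel₀ hs0.ne'])
    (ε := ε / ‖s‖) (by positivity) hη
  refine ⟨z, hz, ?_, hφ⟩
  have h1 : ‖s‖ • (‖s‖⁻¹ • s + z) = (s + z) + (‖s‖ - 1) • z := by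
    rw [smul_add, smul_inv_smul₀ hs0.ne']
    module
  have h2 : ‖s‖ * ‖‖s‖⁻¹ • s + z‖ ≤ ‖s + z‖ + (‖s‖ - 1) * 1 := by
    have := norm_add_le (s + z) ((‖s‖ - 1) • z)
    rw [← h1, norm_smul, norm_smul, norm_norm, Real.norm_of_nonneg (by linarith)] at this
    refine this.trans ?_
    gcongr
  have h3 := mul_le_mul_of_nonneg_left hxz hs0.le
  rw [mul_sub, mul_div_cancel₀ _ hs0.ne'] at h3
  linarith

/-- The tuple with entries `u (τ i)`, in which all points of index at least `k` are replaced
by `y`. -/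
def truncTuple (u : ℕ → X) (y : X) {m : ℕ} (k : ℕ) (τ : Fin m → ℕ) : Fin m → X :=
  fun i => if τ i < k then u (τ i) else y

/-- The constraint in the polynomial case: `z` is close to `y` for all functionals obtained by
freezing all slots but one of the forms `F a` at `y` or at one of `u 0, …, u (k - 1)`. -/
def MultiStep {ι : Type*} (d : ι → ℕ)
    (F : (a : ι) → ContinuousMultilinearMap ℝ (fun _ : Fin (d a) => X) ℝ) (y : X) (η : ℝ)
    (u : ℕ → X) (k : ℕ) (z : X) : Prop :=
  ∀ (a : ι) (j : Fin (d a)) (τ : Fin (d a) → ℕ),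
    |F a (Function.update (truncTuple u y k τ) j z)
      - F a (Function.update (truncTuple u y k τ) j y)| ≤ η

/-- At distinct points of the sequence a form takes almost the value it has at `(y, …, y)`. -/
lemma abs_sub_le_of_injective {ι : Type*} (d : ι → ℕ)
    (F : (a : ι) → ContinuousMultilinearMap ℝ (fun _ : Fin (d a) => X) ℝ) (y : X) {η : ℝ}
    (hη : 0 ≤ η) (u : ℕ → X) (n : ℕ) (hC : ∀ k < n, MultiStep d F y η u k (u k)) (a : ι)
    (τ : Fin (d a) → ℕ) (hτ : Function.Injective τ) :
    |F a (truncTuple u y n τ) - F a (fun _ => y)| ≤ n * η := by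
  induction n with
  | zero =>
    have : truncTuple u y 0 τ = fun _ => y := by
      ext i
      simp [truncTuple]
    simp [this]
  | succ n ih =>
    have ih' := ih (fun k hk => hC k (by omega))
    have hone : |F a (truncTuple u y (n + 1) τ) - F a (truncTuple u y n τ)| ≤ η := by
      by_cases h : ∃ j, τ j = n
      · obtain ⟨j, hj⟩ := h
        have h1 : truncTuple u y (n + 1) τ = Function.update (truncTuple u y n τ) j (u n) := by
          ext i
          by_cases hij : i = j
          · subst hij
            simp [truncTuple, hj]
          · have : τ i ≠ n := fun h => hij (hτ (h.trans hj.symm))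
            rw [Function.update_of_ne hij]
            simp only [truncTuple]
            congr 1
            simp only [eq_iff_iff]
            omega
        have h2 : truncTuple u y n τ = Function.update (truncTuple u y n τ) j y := by
          refine (Function.update_eq_self_iff.2 ?_).symm
          simp [truncTuple, hj]
        rw [h1]
        conv_lhs => rw [h2]
        simpa using hC n (by omega) a j τ
      · push Not at h
        have : truncTuple u y (n + 1) τ = truncTuple u y n τ := by
          ext i
          have := h i
          simp only [truncTuple]
          congr 1
          simp only [eq_iff_iff]
          omega
        simpa [this] using hη
    push_cast
    have := abs_sub_le (F a (truncTuple u y (n + 1) τ)) (F a (truncTuple u y n τ))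
      (F a (fun _ => y))
    linarith

lemma abs_apply_le_opNorm {m : ℕ} (F : ContinuousMultilinearMap ℝ (fun _ : Fin m => X) ℝ)
    (v : Fin m → X) (hv : ∀ i, ‖v i‖ ≤ 1) : |F v| ≤ ‖F‖ := by
  refine (F.le_opNorm v).trans (mul_le_of_le_one_right (norm_nonneg _) ?_)
  exact Finset.prod_le_one (fun _ _ => norm_nonneg _) (fun i _ => hv i)

/-- At most a proportion `m² / n` of the maps `Fin m → Fin n` are not injective. -/
lemma card_not_injective_le (m n : ℕ) (hn : 0 < n) :
    ((Finset.univ.filter fun σ : Fin m → Fin n => ¬ Function.Injective σ).card : ℝ)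
      ≤ (n : ℝ) ^ m * ((m : ℝ) ^ 2 / n) := by
  have hn' : (0 : ℝ) < n := by exact_mod_cast hn
  rcases Nat.lt_or_ge n m with hmn | hmn
  · -- Here the proportion exceeds one, and the trivial bound suffices.
    have h1 : ((Finset.univ.filter fun σ : Fin m → Fin n => ¬ Function.Injective σ).card : ℝ)
        ≤ (n : ℝ) ^ m := by
      have := Finset.card_le_univ
        (Finset.univ.filter fun σ : Fin m → Fin n => ¬ Function.Injective σ)
      simp only [Fintype.card_fun, Fintype.card_fin] at this
      exact_mod_cast this
    refine h1.trans (le_mul_of_one_le_right (by positivity) ?_)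
    rw [one_le_div hn']
    have : (n : ℝ) + 1 ≤ m := by exact_mod_cast hmn
    nlinarith
  · have hinj : (Finset.univ.filter fun σ : Fin m → Fin n => Function.Injective σ).card
        = n.descFactorial m := by
      rw [← Fintype.card_subtype, Fintype.card_congr (Equiv.subtypeInjectiveEquivEmbedding _ _),
        Fintype.card_embedding_eq, Fintype.card_fin, Fintype.card_fin]
    have htot := Finset.card_filter_add_card_filter_not (s := Finset.univ)
      (fun σ : Fin m → Fin n => Function.Injective σ)
    rw [hinj, Finset.card_univ, Fintype.card_fun, Fintype.card_fin, Fintype.card_fin] at htot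
    have htot' : (n.descFactorial m : ℝ) +
        ((Finset.univ.filter fun σ : Fin m → Fin n => ¬ Function.Injective σ).card : ℝ)
        = (n : ℝ) ^ m := by exact_mod_cast htot
    have hlow : ((n : ℝ) - m) ^ m ≤ n.descFactorial m := by
      have h1 := Nat.pow_sub_le_descFactorial n m
      have h2 : ((n + 1 - m : ℕ) : ℝ) ^ m ≤ n.descFactorial m := by exact_mod_cast h1
      refine le_trans (pow_le_pow_left₀ ?_ ?_ m) h2
      · have : (m : ℝ) ≤ n := by exact_mod_cast hmn
        linarith
      · rw [Nat.cast_sub (by omega)]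
        push_cast
        linarith
    have hbern : (n : ℝ) ^ m * (1 - (m : ℝ) ^ 2 / n) ≤ ((n : ℝ) - m) ^ m := by
      have h1 : (m : ℝ) / n ≤ 1 := by
        rw [div_le_one hn']
        exact_mod_cast hmn
      have h2 := one_add_mul_le_pow (a := -((m : ℝ) / n)) (by linarith) m
      have h3 : (n : ℝ) - m = n * (1 + -((m : ℝ) / n)) := by field_simp; ring
      rw [h3, mul_pow]
      have h4 : 1 - (m : ℝ) ^ 2 / n = 1 + m * -((m : ℝ) / n) := by ring
      rw [h4]
      gcongr
    rw [mul_sub, mul_one] at hbern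
    linarith

/-- The value of a form at the average of the sequence, by expanding over all index maps. -/
lemma abs_average_sub_le {ι : Type*} (d : ι → ℕ)
    (F : (a : ι) → ContinuousMultilinearMap ℝ (fun _ : Fin (d a) => X) ℝ) (y : X)
    (hy : ‖y‖ ≤ 1) {η : ℝ} (hη : 0 ≤ η) (u : ℕ → X) {n : ℕ} (hn : 0 < n)
    (hu : ∀ k < n, ‖u k‖ ≤ 1) (hC : ∀ k < n, MultiStep d F y η u k (u k)) (a : ι) :
    |F a (fun _ => (n : ℝ)⁻¹ • ∑ i ∈ Finset.range n, u i) - F a (fun _ => y)|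
      ≤ n * η + (d a : ℝ) ^ 2 / n * (2 * ‖F a‖) := by
  classical
  have hn' : (0 : ℝ) < n := by exact_mod_cast hn
  set m := d a with hm
  have hexp : (n : ℝ) ^ m * (F a (fun _ => (n : ℝ)⁻¹ • ∑ i ∈ Finset.range n, u i)
      - F a (fun _ => y))
      = ∑ σ : Fin m → Fin n, (F a (fun i => u (σ i)) - F a (fun _ => y)) := by
    have h1 : F a (fun _ => (n : ℝ)⁻¹ • ∑ i ∈ Finset.range n, u i)
        = ((n : ℝ)⁻¹) ^ m * F a (fun _ => ∑ i ∈ Finset.range n, u i) := by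
      have := (F a).map_smul_univ (fun _ => (n : ℝ)⁻¹) (fun _ => ∑ i ∈ Finset.range n, u i)
      simpa [hm] using this
    have h2 : F a (fun _ => ∑ i ∈ Finset.range n, u i)
        = ∑ σ : Fin m → Fin n, F a (fun i => u (σ i)) := by
      simp only [Finset.sum_range]
      exact (F a).map_sum (fun _ (j : Fin n) => u j)
    rw [Finset.sum_sub_distrib, h1, h2, mul_sub, ← mul_assoc, ← mul_pow,
      mul_inv_cancel₀ hn'.ne', one_pow, one_mul]
    simp
  have hterm : ∀ σ : Fin m → Fin n, |F a (fun i => u (σ i)) - F a (fun _ => y)|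
      ≤ n * η + if ¬ Function.Injective σ then 2 * ‖F a‖ else 0 := by
    intro σ
    by_cases h : ¬ Function.Injective σ
    · rw [if_pos h]
      have h1 := abs_apply_le_opNorm (F a) (fun i => u (σ i)) (fun i => hu _ (σ i).2)
      have h2 := abs_apply_le_opNorm (F a) (fun _ => y) (fun _ => hy)
      have h3 := abs_sub (F a (fun i => u (σ i))) (F a (fun _ => y))
      have : 0 ≤ n * η := by positivity
      linarith
    · rw [if_neg h]
      push Not at h
      have h1 := abs_sub_le_of_injective d F y hη u n hC a (fun i => (σ i : ℕ))
        (fun i j hij => h (Fin.ext hij))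
      have h2 : truncTuple u y n (fun i => (σ i : ℕ)) = fun i => u (σ i) := by
        ext i
        simp [truncTuple]
      rw [h2] at h1
      simpa using h1
  have hsum : (n : ℝ) ^ m * |F a (fun _ => (n : ℝ)⁻¹ • ∑ i ∈ Finset.range n, u i)
      - F a (fun _ => y)| ≤ (n : ℝ) ^ m * (n * η + (m : ℝ) ^ 2 / n * (2 * ‖F a‖)) := by
    rw [← abs_of_nonneg (show (0 : ℝ) ≤ (n : ℝ) ^ m by positivity), ← abs_mul, hexp,
      abs_of_nonneg (show (0 : ℝ) ≤ (n : ℝ) ^ m by positivity)]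
    refine (Finset.abs_sum_le_sum_abs _ _).trans
      ((Finset.sum_le_sum fun σ _ => hterm σ).trans ?_)
    rw [Finset.sum_add_distrib, ← Finset.sum_filter]
    simp only [Finset.sum_const, Finset.card_univ, Fintype.card_fun, Fintype.card_fin,
      nsmul_eq_mul, Nat.cast_pow]
    rw [mul_add, ← mul_assoc ((n : ℝ) ^ m) ((m : ℝ) ^ 2 / n)]
    gcongr
    convert card_not_injective_le m n hn
  exact le_of_mul_le_mul_left hsum (by positivity)

/-- The polynomial Shvidkoy lemma for finitely many multilinear forms on the diagonal. -/
lemma exists_multilinear_close (hDP : HasDaugavet X) {ι : Type*} [Fintype ι] (d : ι → ℕ)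
    (F : (a : ι) → ContinuousMultilinearMap ℝ (fun _ : Fin (d a) => X) ℝ) (y : X)
    (hy : ‖y‖ ≤ 1) (x : X) (hx : ‖x‖ = 1) {ε η : ℝ} (hε : 0 < ε) (hη : 0 < η) :
    ∃ z : X, ‖z‖ ≤ 1 ∧ 2 - ε ≤ ‖x + z‖ ∧
      ∀ a, |F a (fun _ => z) - F a (fun _ => y)| ≤ η := by
  set M : ℝ := ∑ a, (d a : ℝ) ^ 2 * (2 * ‖F a‖) with hM
  have hM0 : 0 ≤ M := by positivity
  obtain ⟨n, hn⟩ := exists_nat_gt (M / (η / 2))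
  have hn' : (0 : ℝ) < n := lt_of_le_of_lt (by positivity) hn
  have hn0 : 0 < n := by exact_mod_cast hn'
  have hη' : 0 < η / 2 / n := by positivity
  obtain ⟨u, hu, hC, hsum⟩ := exists_seq (MultiStep d F y (η / 2 / n))
    (by
      intro u v k z huv h a j τ
      have : truncTuple v y k τ = truncTuple u y k τ := by
        ext i
        simp only [truncTuple]
        split_ifs with hi
        · exact (huv _ hi).symm
        · rfl
      rw [this]
      exact h a j τ)
    (by
      intro u k _ s hs ε' hε'
      -- Indices at least `k` all stand for `y`, so index maps into `Fin (k + 1)` give all the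
      -- functionals that occur.
      obtain ⟨z, hz, hsz, hφ⟩ := exists_weak_close' hDP
        (κ := Σ a : ι, Fin (d a) × (Fin (d a) → Fin (k + 1)))
        (fun q => (F q.1).toContinuousLinearMap
          (truncTuple u y k (fun i => (q.2.2 i : ℕ))) q.2.1) y hy s hs hε' hη'
      refine ⟨z, hz, hsz, fun a j τ => ?_⟩
      have h := hφ ⟨a, j, fun i => ⟨min (τ i) k, by omega⟩⟩
      have h2 : truncTuple u y k (fun i => min (τ i) k) = truncTuple u y k τ := by
        ext i
        by_cases hi : τ i < k
        · simp [truncTuple, hi, hi.le]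
        · simp [truncTuple, hi]
      simp only [h2] at h
      exact h)
    x hx (ε := min 1 (ε / n)) (lt_min one_pos (by positivity)) (min_le_left _ _) n
  refine ⟨_, norm_average_le u hn0 hu, ?_, ?_⟩
  · refine norm_add_average x u hn0 hu (le_trans ?_ hsum)
    have : (n : ℝ) * min 1 (ε / n) ≤ n * (ε / n) := by gcongr; exact min_le_right _ _
    rw [mul_div_cancel₀ _ hn'.ne'] at this
    linarith
  · intro a
    refine (abs_average_sub_le d F y hy hη'.le u hn0 hu hC a).trans ?_
    have ha : (d a : ℝ) ^ 2 * (2 * ‖F a‖) ≤ M :=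
      Finset.single_le_sum (f := fun a => (d a : ℝ) ^ 2 * (2 * ‖F a‖))
        (fun a _ => by positivity) (Finset.mem_univ a)
    have h1 : (d a : ℝ) ^ 2 / n * (2 * ‖F a‖) ≤ η / 2 := by
      rw [div_mul_eq_mul_div, div_le_iff₀ hn']
      rw [div_lt_iff₀ (by positivity)] at hn
      linarith
    rw [mul_div_cancel₀ _ hn'.ne']
    linarith

end Shvidkoy

/-- polynomial Shvidkoy lemma: if `X` has the Daugavet property, then for
every `x ∈ S_X` and `ε > 0`, the set `{y ∈ B_X : ‖x + y‖ > 2 - ε}` is dense in `B_X` for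
the weak polynomial topology. -/
theorem polynomial_shvidkoy_lemma
    {X : Type*} [NormedAddCommGroup X] [NormedSpace ℝ X] [CompleteSpace X]
    (hDP : ∀ (f : X →L[ℝ] ℝ) (y₀ : X),
      ‖ContinuousLinearMap.id ℝ X + f.smulRight y₀‖ = 1 + ‖f‖ * ‖y₀‖) :
    ∀ (x : X), ‖x‖ = 1 → ∀ ε > (0 : ℝ),
      ∀ (y : X), ‖y‖ ≤ 1 →
        ∀ (k : ℕ) (p : Fin k → (X → ℝ)), (∀ i, IsScalarPoly (p i)) →
          ∀ δ > (0 : ℝ),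
            ∃ z : X, ‖z‖ ≤ 1 ∧ ‖x + z‖ > 2 - ε ∧
              ∀ i : Fin k, |p i z - p i y| < δ := by
  intro x hx ε hε y hy k p hp δ hδ
  choose N c F hF using hp
  set K : ℝ := 1 + ∑ i, (N i : ℝ) with hK
  have hK0 : 0 < K := by positivity
  obtain ⟨z, hz, hxz, hclose⟩ := exists_multilinear_close hDP
    (ι := Σ i : Fin k, Fin (N i + 1)) (fun q => (q.2 : ℕ)) (fun q => F q.1 (q.2 : ℕ)) y hy x hx
    (ε := ε / 2) (η := δ / K) (by positivity) (by positivity)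
  refine ⟨z, hz, by linarith, fun i => ?_⟩
  rw [hF i z, hF i y, add_sub_add_left_eq_sub, ← Finset.sum_sub_distrib]
  have hsum : |∑ n ∈ Finset.Icc 1 (N i), (F i n (fun _ => z) - F i n (fun _ => y))|
      ≤ ∑ n ∈ Finset.Icc 1 (N i), δ / K := by
    refine (Finset.abs_sum_le_sum_abs _ _).trans (Finset.sum_le_sum fun n hn => ?_)
    exact hclose ⟨i, ⟨n, by have := (Finset.mem_Icc.1 hn).2; omega⟩⟩
  refine hsum.trans_lt ?_
  have hN : (N i : ℝ) ≤ ∑ i, (N i : ℝ) :=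
    Finset.single_le_sum (f := fun i => (N i : ℝ)) (fun i _ => by positivity) (Finset.mem_univ i)
  rw [Finset.sum_const, Nat.card_Icc, Nat.add_sub_cancel, nsmul_eq_mul, ← mul_div_assoc,
    div_lt_iff₀ hK0]
  nlinarith
end

section
/- Let X be a real Banach space with the Daugavet property, let x ∈ S_X, y ∈ B_X, ε ∈ (0,1), let N ∈ ℕ with N ≥ 1, and let F₁, …, F_k be continuous symmetric multilinear forms on X, where F_j is m_j-linear with 1 ≤ m_j ≤ N for each j. Then there exist y₁, …, y_N ∈ B_X such that ‖x + ∑_{i=1}^{N} y_i‖ > N + 1 − ε/(N+1), and such that |F_j(y_{i₁}, …, y_{i_{m_j}}) − F_j(y, …, y)| < ε for every j ∈ {1, …, k} and every choice of indices 1 ≤ i₁ < i₂ < … < i_{m_j} ≤ N. -/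
/-!
The theorem is obtained by choosing `y₁, …, y_N` one at a time.

* `exists_mem_slice`: the norm identity for the rank-one operators `z ↦ f z • u` says that every
  slice of the unit ball contains points `z` almost orthogonal to `u` in the `ℓ₁` sense,
  `‖u + z‖ ≥ ‖u‖ + 1 - δ`.
* `exists_mem_weak_nhd`: slices can be replaced by weak neighbourhoods of a point `y` of the ball
  (Shvidkoy's lemma). The average of `M` points `z₁, …, z_M` is used, each chosen greedily: if
  `s ∈ ℝⁿ` is the accumulated error `∑ (f (z_i) - f y)`, the next point is taken from the slice
  where `⟨s, f z - f y⟩` is almost nonpositive. Then `‖s‖²` grows at most linearly in `M`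
  (`exists_greedy_sum`), so the error of the average is `O(1/√M)`.
* `exists_sequence`: each new `y_n` is chosen by the previous lemma, close to `y` with respect to
  all the functionals obtained from the forms `F j` by filling all slots but one with `y` or
  previously chosen vectors. Replacing `y` by `y_n` in one slot then changes the values by at
  most `δ`, so after `N` choices the total change is at most `N * δ`.
-/

/-- The slice form of the Daugavet property for a functional of norm one and `u ≠ 0`. -/
lemma exists_mem_slice_of_norm_one_s6 {X : Type*} [NormedAddCommGroup X] [NormedSpace ℝ X]
    (hDP : ∀ (f : X →L[ℝ] ℝ) (y₀ : X),
      ‖ContinuousLinearMap.id ℝ X + f.smulRight y₀‖ = 1 + ‖f‖ * ‖y₀‖)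
    (g : X →L[ℝ] ℝ) (hg : ‖g‖ = 1) (u : X) (hu : u ≠ 0) (δ η : ℝ) (hδ : 0 < δ) (hη : 0 < η) :
    ∃ z : X, ‖z‖ ≤ 1 ∧ 1 - η ≤ g z ∧ ‖u‖ + 1 - δ ≤ ‖u + z‖ := by
  have hu' : 0 < ‖u‖ := norm_pos_iff.mpr hu
  obtain ⟨d, hd, hd1, hd2⟩ : ∃ d : ℝ, 0 < d ∧ d ≤ δ / 2 ∧ d ≤ η * ‖u‖ :=
    ⟨min (δ / 2) (η * ‖u‖), by positivity, min_le_left _ _, min_le_right _ _⟩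
  have hlt : 1 + ‖u‖ - d < ‖ContinuousLinearMap.id ℝ X + g.smulRight u‖ := by
    rw [hDP, hg]; linarith
  obtain ⟨z₀, hz₀, hz₀'⟩ := ContinuousLinearMap.exists_lt_apply_of_lt_opNorm _ hlt
  -- The unit ball is symmetric, so the sign of `g z` can be chosen.
  obtain ⟨z, hz, hpos, hbig⟩ : ∃ z : X, ‖z‖ ≤ 1 ∧ 0 ≤ g z ∧ 1 + ‖u‖ - d < ‖z + g z • u‖ := by
    rcases le_total 0 (g z₀) with h | h
    · exact ⟨z₀, hz₀.le, h, by simpa using hz₀'⟩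
    · refine ⟨-z₀, by simpa using hz₀.le, by simpa using h, ?_⟩
      have : -z₀ + g (-z₀) • u = -(z₀ + g z₀ • u) := by simp; abel
      rw [this, norm_neg]
      simpa using hz₀'
  have hle : g z ≤ 1 := by
    have := g.le_opNorm z
    rw [hg, Real.norm_eq_abs, abs_of_nonneg hpos] at this
    linarith
  have h1 : ‖z + g z • u‖ ≤ 1 + g z * ‖u‖ := by
    refine (norm_add_le _ _).trans ?_
    rw [norm_smul, Real.norm_eq_abs, abs_of_nonneg hpos]
    linarith
  have h2 : ‖z + g z • u‖ ≤ ‖u + z‖ + (1 - g z) * ‖u‖ := by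
    have : z + g z • u = (u + z) - (1 - g z) • u := by rw [sub_smul, one_smul]; abel
    rw [this]
    refine (norm_sub_le _ _).trans ?_
    rw [norm_smul, Real.norm_eq_abs, abs_of_nonneg (by linarith : 0 ≤ 1 - g z)]
  refine ⟨z, hz, ?_, by nlinarith⟩
  by_contra hcon
  push Not at hcon
  have : η * ‖u‖ < (1 - g z) * ‖u‖ := mul_lt_mul_of_pos_right (by linarith) hu'
  nlinarith

/-- The slice form of the Daugavet property: the slice of the unit ball on which a functional
nearly reaches its value at `y` contains points at almost the largest possible distance from
`-u`. -/
lemma exists_mem_slice_s6 {X : Type*} [NormedAddCommGroup X] [NormedSpace ℝ X] [Nontrivial X]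
    (hDP : ∀ (f : X →L[ℝ] ℝ) (y₀ : X),
      ‖ContinuousLinearMap.id ℝ X + f.smulRight y₀‖ = 1 + ‖f‖ * ‖y₀‖)
    (f : X →L[ℝ] ℝ) (u y : X) (hy : ‖y‖ ≤ 1) (δ η : ℝ) (hδ : 0 < δ) (hη : 0 < η) :
    ∃ z : X, ‖z‖ ≤ 1 ∧ f y - η ≤ f z ∧ ‖u‖ + 1 - δ ≤ ‖u + z‖ := by
  -- For `u = 0`, any nonzero vector in place of `u` gives the bound on `‖z‖`.
  obtain ⟨w, hw, hwu⟩ : ∃ w : X, w ≠ 0 ∧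
      ∀ z : X, ‖w‖ + 1 - δ ≤ ‖w + z‖ → ‖u‖ + 1 - δ ≤ ‖u + z‖ := by
    by_cases hu : u = 0
    · obtain ⟨w, hw⟩ := exists_ne (0 : X)
      refine ⟨w, hw, fun z hz => ?_⟩
      have := norm_add_le w z
      simp only [hu, norm_zero, zero_add]
      linarith
    · exact ⟨u, hu, fun _ h => h⟩
  by_cases hf : f = 0
  · obtain ⟨g, hg, -⟩ := exists_dual_vector ℝ w (norm_ne_zero_iff.mpr hw)
    obtain ⟨z, hz, -, h⟩ := exists_mem_slice_of_norm_one_s6 hDP g hg w hw δ 1 hδ one_pos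
    exact ⟨z, hz, by simp [hf, hη.le], hwu z h⟩
  · have hc : 0 < ‖f‖ := norm_pos_iff.mpr hf
    obtain ⟨z, hz, hfz, h⟩ := exists_mem_slice_of_norm_one_s6 hDP (‖f‖⁻¹ • f)
      (by rw [norm_smul, norm_inv, norm_norm, inv_mul_cancel₀ hc.ne']) w hw δ (η / ‖f‖) hδ
      (by positivity)
    refine ⟨z, hz, ?_, hwu z h⟩
    have h1 : f y ≤ ‖f‖ := by
      have := f.le_opNorm y
      have h2 := le_abs_self (f y)
      rw [Real.norm_eq_abs] at this
      nlinarith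
    have h2 : ‖f‖ * (1 - η / ‖f‖) ≤ ‖f‖ * (‖f‖⁻¹ * f z) := by
      refine mul_le_mul_of_nonneg_left ?_ hc.le
      simpa using hfz
    rw [mul_inv_cancel_left₀ hc.ne', mul_sub, mul_div_cancel₀ _ hc.ne'] at h2
    linarith

/-- The greedy construction: `S` is a sum of `M` points of the unit ball, each of which almost
adds `1` to the norm, while the squared error `∑ (f i S - M * f i y) ^ 2` stays `O(M)`. -/
lemma exists_greedy_sum {X : Type*} [NormedAddCommGroup X] [NormedSpace ℝ X] [Nontrivial X]
    (hDP : ∀ (f : X →L[ℝ] ℝ) (y₀ : X),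
      ‖ContinuousLinearMap.id ℝ X + f.smulRight y₀‖ = 1 + ‖f‖ * ‖y₀‖)
    {ι : Type*} [Fintype ι] (f : ι → X →L[ℝ] ℝ) (v y : X) (hy : ‖y‖ ≤ 1) (δ : ℝ) (hδ : 0 < δ)
    (M : ℕ) :
    ∃ S : X, ‖S‖ ≤ M ∧ ‖v‖ + M * (1 - δ) ≤ ‖v + S‖ ∧
      ∑ i, (f i S - M * f i y) ^ 2 ≤ M * (1 + ∑ i, (2 * ‖f i‖) ^ 2) := by
  induction M with
  | zero => exact ⟨0, by simp⟩
  | succ M ih =>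
    obtain ⟨S, hS, hv, hs⟩ := ih
    set s : ι → ℝ := fun i => f i S - M * f i y with hs_def
    obtain ⟨z, hz, hgz, hz'⟩ := exists_mem_slice_s6 hDP (-∑ i, s i • f i) (v + S) y hy δ (1 / 2) hδ
      (by norm_num)
    have hcross : ∑ i, s i * (f i z - f i y) ≤ 1 / 2 := by
      simp only [neg_apply, sum_apply,
        smul_apply, smul_eq_mul] at hgz
      simp only [mul_sub, Finset.sum_sub_distrib]
      linarith
    have hsq : ∑ i, (f i z - f i y) ^ 2 ≤ ∑ i, (2 * ‖f i‖) ^ 2 := by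
      refine Finset.sum_le_sum fun i _ => ?_
      rw [← map_sub, ← sq_abs]
      refine pow_le_pow_left₀ (abs_nonneg _) ?_ 2
      refine ((f i).le_opNorm _).trans ?_
      have := norm_sub_le z y
      nlinarith [norm_nonneg (f i)]
    refine ⟨S + z, ?_, ?_, ?_⟩
    · push_cast
      linarith [norm_add_le S z]
    · rw [← add_assoc]
      push_cast
      linarith
    · have hexp : ∑ i, (f i (S + z) - ((M + 1 : ℕ) : ℝ) * f i y) ^ 2
          = ∑ i, s i ^ 2 + 2 * ∑ i, s i * (f i z - f i y) + ∑ i, (f i z - f i y) ^ 2 := by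
        rw [Finset.mul_sum, ← Finset.sum_add_distrib, ← Finset.sum_add_distrib]
        refine Finset.sum_congr rfl fun i _ => ?_
        simp only [hs_def, map_add]
        push_cast
        ring
      rw [hexp]
      push_cast
      linarith

/-- Shvidkoy's lemma: every weak neighbourhood of a point `y` of the unit ball contains points of
the ball at almost the largest possible distance from `-u`. -/
lemma exists_mem_weak_nhd {X : Type*} [NormedAddCommGroup X] [NormedSpace ℝ X] [Nontrivial X]
    (hDP : ∀ (f : X →L[ℝ] ℝ) (y₀ : X),
      ‖ContinuousLinearMap.id ℝ X + f.smulRight y₀‖ = 1 + ‖f‖ * ‖y₀‖)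
    {ι : Type*} [Fintype ι] (f : ι → X →L[ℝ] ℝ) (u y : X) (hy : ‖y‖ ≤ 1) (δ : ℝ) (hδ : 0 < δ) :
    ∃ z : X, ‖z‖ ≤ 1 ∧ ‖u‖ + (1 - δ) ≤ ‖u + z‖ ∧ ∀ i, |f i z - f i y| ≤ δ := by
  set C : ℝ := 1 + ∑ i, (2 * ‖f i‖) ^ 2 with hC
  have hC0 : 0 < C := by positivity
  obtain ⟨M, hM⟩ := exists_nat_gt (C / δ ^ 2)
  have hM0 : (0 : ℝ) < M := lt_trans (by positivity) hM
  have hCM : C ≤ M * δ ^ 2 := ((div_lt_iff₀ (by positivity)).mp hM).le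
  -- Starting from `M • u` makes the estimate for `S` scale to one for the average `M⁻¹ • S`.
  obtain ⟨S, hS, hv, hs⟩ := exists_greedy_sum hDP f ((M : ℝ) • u) y hy δ hδ M
  refine ⟨(M : ℝ)⁻¹ • S, ?_, ?_, fun i => ?_⟩
  · rw [norm_smul, norm_inv, Real.norm_natCast]
    exact (inv_mul_le_one₀ hM0).mpr hS
  · have h : (M : ℝ) • u + S = (M : ℝ) • (u + (M : ℝ)⁻¹ • S) := by
      rw [smul_add, smul_inv_smul₀ hM0.ne']
    rw [h, norm_smul, norm_smul, Real.norm_natCast, ← mul_add] at hv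
    exact le_of_mul_le_mul_left hv hM0
  · have h1 : (f i S - M * f i y) ^ 2 ≤ M * C :=
      (Finset.single_le_sum (f := fun i => (f i S - M * f i y) ^ 2)
        (fun _ _ => sq_nonneg _) (Finset.mem_univ i)).trans hs
    have h2 : f i S - M * f i y = M * (f i ((M : ℝ)⁻¹ • S) - f i y) := by
      rw [map_smul, smul_eq_mul, mul_sub, mul_inv_cancel_left₀ hM0.ne']
    rw [h2] at h1
    refine abs_le_of_sq_le_sq ?_ hδ.le
    have h3 : (M : ℝ) ^ 2 * (f i ((M : ℝ)⁻¹ • S) - f i y) ^ 2 ≤ (M : ℝ) ^ 2 * δ ^ 2 := by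
      nlinarith
    exact le_of_mul_le_mul_left h3 (by positivity)

/-- The successive choice of `y₁, …, y_n`. The sequence `ys` equals `y` from index `n` on, so that
`F j (ys ∘ c)` also covers the forms in which only some of the slots hold a chosen vector; each
chosen vector occupies at most one slot because `c` is injective. -/
lemma exists_sequence {X : Type*} [NormedAddCommGroup X] [NormedSpace ℝ X] [Nontrivial X]
    (hDP : ∀ (f : X →L[ℝ] ℝ) (y₀ : X),
      ‖ContinuousLinearMap.id ℝ X + f.smulRight y₀‖ = 1 + ‖f‖ * ‖y₀‖)
    (x y : X) (hy : ‖y‖ ≤ 1) (δ : ℝ) (hδ : 0 < δ) (k : ℕ) (m : Fin k → ℕ)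
    (F : (j : Fin k) → ContinuousMultilinearMap ℝ (fun _ : Fin (m j) => X) ℝ) (n : ℕ) :
    ∃ ys : ℕ → X, (∀ i, ‖ys i‖ ≤ 1) ∧ (∀ i, n ≤ i → ys i = y) ∧
      ‖x‖ + n * (1 - δ) ≤ ‖x + ∑ i ∈ Finset.range n, ys i‖ ∧
      ∀ (j : Fin k) (c : Fin (m j) → ℕ), Function.Injective c →
        |F j (ys ∘ c) - F j (fun _ => y)| ≤ n * δ := by
  induction n with
  | zero => exact ⟨fun _ => y, by simp [hy, Function.comp_def]⟩
  | succ n ih =>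
    obtain ⟨ys, hb, htail, hnorm, hF⟩ := ih
    -- `ys` takes at most `n + 1` values, so finitely many functionals have to be controlled.
    obtain ⟨z, hz, hzn, hzF⟩ := exists_mem_weak_nhd hDP
      (ι := Σ j : Fin k, (Fin (m j) → Fin (n + 1)) × Fin (m j))
      (fun a => (F a.1).toContinuousLinearMap (fun p => ys (a.2.1 p)) a.2.2)
      (x + ∑ i ∈ Finset.range n, ys i) y hy δ hδ
    refine ⟨Function.update ys n z, fun i => ?_, fun i hi => ?_, ?_, fun j c hc => ?_⟩
    · rcases eq_or_ne i n with rfl | h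
      · simpa using hz
      · simpa [h] using hb i
    · rw [Function.update_of_ne (by omega)]
      exact htail i (by omega)
    · have : ∑ i ∈ Finset.range n, Function.update ys n z i = ∑ i ∈ Finset.range n, ys i :=
        Finset.sum_congr rfl fun i hi =>
          Function.update_of_ne (Finset.mem_range.mp hi).ne _ _
      rw [Finset.sum_range_succ, this, Function.update_self, ← add_assoc]
      push_cast
      linarith
    · push_cast
      by_cases hr : ∃ p, c p = n
      · obtain ⟨p, hp⟩ := hr
        have h1 : Function.update ys n z ∘ c = Function.update (ys ∘ c) p z := by
          rw [← hp]; exact Function.update_comp_eq_of_injective ys hc p z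
        have h2 : ys ∘ c = Function.update (ys ∘ c) p y := by
          rw [← htail n le_rfl, ← hp]
          exact (Function.update_eq_self p (ys ∘ c)).symm
        have h3 := hzF ⟨j, fun q => ⟨min (c q) n, by omega⟩, p⟩
        have h4 : (fun q => ys (min (c q) n)) = ys ∘ c := by
          funext q
          rcases le_total (c q) n with h | h
          · simp [h]
          · simp [h, htail]
        have h3' : |F j (Function.update (ys ∘ c) p z) - F j (Function.update (ys ∘ c) p y)| ≤ δ := by
          rw [← h4]; exact h3
        rw [← h2, ← h1] at h3'
        have := hF j c hc
        have h5 := abs_sub_le (F j (Function.update ys n z ∘ c)) (F j (ys ∘ c)) (F j fun _ => y)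
        linarith
      · push Not at hr
        have : Function.update ys n z ∘ c = ys ∘ c := by
          funext q
          exact Function.update_of_ne (hr q) _ _
        rw [this]
        linarith [hF j c hc]


/-- inductive step of the polynomial Shvidkoy lemma. Given a Banach space
with the Daugavet property, `x ∈ S_X`, `y ∈ B_X`, `ε ∈ (0,1)`, `N ≥ 1`, and finitely many
continuous symmetric multilinear forms `F j` (each `m j`-linear with `1 ≤ m j ≤ N`), one
can find `y₁, …, y_N ∈ B_X` with `‖x + ∑ y_i‖ > N + 1 - ε/(N+1)` and
`|F j (y_{i₁}, …, y_{i_{m j}}) - F j (y, …, y)| < ε` for all `j` and all strictly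
increasing index choices. -/
theorem daugavet_multilinear_approximation
    {X : Type*} [NormedAddCommGroup X] [NormedSpace ℝ X] [CompleteSpace X]
    (hDP : ∀ (f : X →L[ℝ] ℝ) (y₀ : X),
      ‖ContinuousLinearMap.id ℝ X + f.smulRight y₀‖ = 1 + ‖f‖ * ‖y₀‖)
    (x y : X) (hx : ‖x‖ = 1) (hy : ‖y‖ ≤ 1)
    (ε : ℝ) (hε : ε ∈ Set.Ioo (0 : ℝ) 1)
    (N : ℕ) (hN : 1 ≤ N)
    (k : ℕ) (m : Fin k → ℕ)
    (F : (j : Fin k) → ContinuousMultilinearMap ℝ (fun _ : Fin (m j) => X) ℝ)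
    (hm : ∀ j, 1 ≤ m j ∧ m j ≤ N)
    (hsym : ∀ (j : Fin k) (σ : Equiv.Perm (Fin (m j))) (v : Fin (m j) → X),
      F j (v ∘ σ) = F j v) :
    ∃ ys : Fin N → X, (∀ i, ‖ys i‖ ≤ 1) ∧
      ‖x + ∑ i, ys i‖ > (N : ℝ) + 1 - ε / ((N : ℝ) + 1) ∧
      ∀ (j : Fin k) (idx : Fin (m j) → Fin N), StrictMono idx →
        |F j (fun t => ys (idx t)) - F j (fun _ => y)| < ε := by
  have hε0 := hε.1
  have hN0 : (0 : ℝ) < (N : ℝ) + 1 := by positivity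
  have : Nontrivial X := ⟨x, 0, fun h => by simp [h] at hx⟩
  obtain ⟨ys, hb, -, hnorm, hF⟩ := exists_sequence hDP x y hy (ε / ((N : ℝ) + 1) ^ 2)
    (by positivity) k m F N
  have hδ1 : (N : ℝ) * (ε / ((N : ℝ) + 1) ^ 2) < ε / ((N : ℝ) + 1) := by
    rw [← mul_div_assoc, div_lt_div_iff₀ (by positivity) hN0]
    have : 0 < ε * ((N : ℝ) + 1) := by positivity
    nlinarith
  have hδ2 : ε / ((N : ℝ) + 1) ≤ ε := div_le_self hε0.le (by linarith [N.cast_nonneg (α := ℝ)])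
  refine ⟨fun i => ys i, fun i => hb i, ?_, fun j idx hidx => ?_⟩
  · rw [Fin.sum_univ_eq_sum_range (fun i => ys i) N]
    rw [hx] at hnorm
    linarith
  · have := hF j (fun t => (idx t : ℕ)) (Fin.val_injective.comp hidx.injective)
    exact lt_of_le_of_lt this (by linarith)
end

section
/- Let X be a real Banach space with the Daugavet property. Then for every x ∈ S_X, every ε > 0, and every continuous scalar polynomial p on X with sup_{‖z‖≤1} |p(z)| = 1, there exist y ∈ B_X and ω ∈ {−1, 1} such that ω·p(y) > 1 − ε and ‖x + ω·y‖ > 2 − ε. -/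
/-- Every slice of the unit ball contains a point whose nonnegative multiples are almost
`ℓ₁`-orthogonal to a given vector of norm at most `2`. -/
lemma exists_mem_slice_norm_add_ge
    {X : Type*} [NormedAddCommGroup X] [NormedSpace ℝ X]
    (hDP : ∀ (f : X →L[ℝ] ℝ) (y₀ : X),
      ‖ContinuousLinearMap.id ℝ X + f.smulRight y₀‖ = 1 + ‖f‖ * ‖y₀‖)
    (f : X →L[ℝ] ℝ) (u : X) (hu : u ≠ 0) (hu2 : ‖u‖ ≤ 2) (t : ℝ) (ht : 0 ≤ t) (ht2 : t ≤ 2)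
    (δ : ℝ) (hδ : 0 < δ) :
    ∃ y : X, ‖y‖ ≤ 1 ∧ ‖f‖ - δ ≤ f y ∧ ‖u‖ + t - δ ≤ ‖u + t • y‖ := by
  have ha : 0 < ‖u‖ := norm_pos_iff.2 hu
  obtain ⟨v, hv, huv⟩ : ∃ v : X, ‖v‖ = 1 ∧ ‖u‖ • v = u :=
    ⟨‖u‖⁻¹ • u, by rw [norm_smul, norm_inv, norm_norm, inv_mul_cancel₀ ha.ne'],
      by rw [smul_smul, mul_inv_cancel₀ ha.ne', one_smul]⟩
  rcases eq_or_ne f 0 with rfl | hf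
  · refine ⟨v, hv.le, by simp [hδ.le], ?_⟩
    have : u + t • v = (‖u‖ + t) • v := by rw [add_smul, huv]
    rw [this, norm_smul, hv, Real.norm_of_nonneg (by positivity)]
    linarith
  have hF : 0 < ‖f‖ := norm_pos_iff.2 hf
  obtain ⟨η, hη, hη1, hη2, hη3⟩ : ∃ η : ℝ, 0 < η ∧ η < 1 ∧ ‖f‖ * η ≤ δ ∧ 4 * η ≤ δ := by
    refine ⟨min (1 / 2) (min (δ / ‖f‖) (δ / 4)), by positivity, ?_, ?_, ?_⟩
    · exact (min_le_left _ _).trans_lt (by norm_num)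
    · calc _ ≤ ‖f‖ * (δ / ‖f‖) := by
            gcongr
            exact (min_le_right _ _).trans (min_le_left _ _)
        _ = δ := by field_simp
    · calc _ ≤ 4 * (δ / 4) := by
            gcongr
            exact (min_le_right _ _).trans (min_le_right _ _)
        _ = δ := by ring
  set g : X →L[ℝ] ℝ := ‖f‖⁻¹ • f with hg
  have hg1 : ‖g‖ = 1 := by rw [hg, norm_smul, norm_inv, norm_norm, inv_mul_cancel₀ hF.ne']
  have hfg : ∀ y, f y = ‖f‖ * g y := fun y => by
    simp [hg, hF.ne']
  have hT := hDP g v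
  rw [hg1, hv] at hT
  obtain ⟨y, hy, hy'⟩ : ∃ y : X, ‖y‖ ≤ 1 ∧ 2 - η < ‖y + g y • v‖ := by
    by_contra! hcon
    have : ‖ContinuousLinearMap.id ℝ X + g.smulRight v‖ ≤ 2 - η := by
      refine ContinuousLinearMap.opNorm_le_of_unit_norm (by linarith) fun z hz => ?_
      simpa using hcon z hz.le
    linarith
  -- Replacing `y` by `-y` if necessary, `g` may be assumed nonnegative at `y`.
  wlog hpos : 0 ≤ g y generalizing y
  · refine this (-y) (by simpa using hy) ?_ ?_
    · rw [map_neg, neg_smul, ← neg_add, norm_neg]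
      exact hy'
    · rw [map_neg]
      linarith
  have hgy1 : g y ≤ 1 := by
    have := g.le_of_opNorm_le hg1.le y
    linarith [Real.le_norm_self (g y)]
  have hgy : 1 - η ≤ g y := by
    have := norm_add_le y (g y • v)
    rw [norm_smul, hv, Real.norm_of_nonneg hpos] at this
    linarith
  have hyv : 2 - 2 * η ≤ ‖v + y‖ := by
    have h1 : y + g y • v = (v + y) - (1 - g y) • v := by
      rw [sub_smul, one_smul]; abel
    have := norm_sub_le (v + y) ((1 - g y) • v)
    rw [← h1, norm_smul, hv, Real.norm_of_nonneg (by linarith)] at this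
    linarith
  refine ⟨y, hy, ?_, ?_⟩
  · rw [hfg]
    nlinarith
  rcases le_total t ‖u‖ with h | h
  · have h1 : ‖u‖ • (v + y) = (u + t • y) + (‖u‖ - t) • y := by
      rw [smul_add, huv, sub_smul]; abel
    have := norm_add_le (u + t • y) ((‖u‖ - t) • y)
    rw [← h1, norm_smul, norm_smul, norm_norm, Real.norm_of_nonneg (sub_nonneg.2 h)] at this
    nlinarith
  · have h1 : t • (v + y) = (u + t • y) + (t - ‖u‖) • v := by
      rw [smul_add, sub_smul, huv]; abel
    have := norm_add_le (u + t • y) ((t - ‖u‖) • v)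
    rw [← h1, norm_smul, norm_smul, hv, Real.norm_of_nonneg ht,
      Real.norm_of_nonneg (sub_nonneg.2 h)] at this
    nlinarith

lemma exists_taylor_multilinear
    {X : Type*} [NormedAddCommGroup X] [NormedSpace ℝ X] {n : ℕ}
    (F : ContinuousMultilinearMap ℝ (fun _ : Fin n => X) ℝ) :
    ∃ C : ℝ, 0 ≤ C ∧ ∀ z : X, ‖z‖ ≤ 1 → ∃ f : X →L[ℝ] ℝ, ∀ h : X, ‖h‖ ≤ 1 →
      |F (fun _ => z + h) - F (fun _ => z) - f h| ≤ C * ‖h‖ ^ 2 := by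
  classical
  refine ⟨∑ s : Finset (Fin n) with 2 ≤ s.card, ‖F‖, by positivity, fun z hz => ?_⟩
  refine ⟨(F.linearDeriv (fun _ => z)).comp (ContinuousLinearMap.pi fun _ => .id ℝ X),
    fun h hh => ?_⟩
  have key := F.toMultilinearMap.map_add_eq_map_add_linearDeriv_add (fun _ => z) (fun _ => h)
  have e : F (fun _ => z + h) - F (fun _ => z)
      - ((F.linearDeriv (fun _ => z)).comp (ContinuousLinearMap.pi fun _ => .id ℝ X)) h
      = ∑ s : Finset (Fin n) with 2 ≤ s.card, F (s.piecewise (fun _ => h) (fun _ => z)) := by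
    rw [sub_sub, sub_eq_iff_eq_add']
    simpa [ContinuousMultilinearMap.linearDeriv_apply, MultilinearMap.linearDeriv_apply,
      Pi.add_def] using key
  rw [e, Finset.sum_mul]
  refine (Finset.abs_sum_le_sum_abs _ _).trans (Finset.sum_le_sum fun s hs => ?_)
  have hs2 : 2 ≤ s.card := by simpa using hs
  refine (F.le_opNorm _).trans (mul_le_mul_of_nonneg_left ?_ (norm_nonneg _))
  calc ∏ i, ‖s.piecewise (fun _ => h) (fun _ => z) i‖
      ≤ ∏ i, s.piecewise (fun _ => ‖h‖) (fun _ => (1 : ℝ)) i := by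
        refine Finset.prod_le_prod (fun _ _ => norm_nonneg _) fun i _ => ?_
        by_cases hi : i ∈ s <;> simp [hi, hz]
    _ = ‖h‖ ^ s.card := by simp [Finset.prod_piecewise]
    _ ≤ ‖h‖ ^ 2 := pow_le_pow_of_le_one (norm_nonneg _) hh hs2

lemma IsScalarPoly.exists_taylor
    {X : Type*} [NormedAddCommGroup X] [NormedSpace ℝ X] {p : X → ℝ} (hp : IsScalarPoly p) :
    ∃ C : ℝ, 0 ≤ C ∧ ∀ z : X, ‖z‖ ≤ 1 → ∃ f : X →L[ℝ] ℝ, ∀ h : X, ‖h‖ ≤ 1 →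
      |p (z + h) - p z - f h| ≤ C * ‖h‖ ^ 2 := by
  obtain ⟨N, c, F, hF⟩ := hp
  choose C hC0 hC using fun n => exists_taylor_multilinear (F n)
  refine ⟨∑ n ∈ Finset.Icc 1 N, C n, Finset.sum_nonneg fun n _ => hC0 n, fun z hz => ?_⟩
  choose f hf using fun n => hC n z hz
  refine ⟨∑ n ∈ Finset.Icc 1 N, f n, fun h hh => ?_⟩
  have e : p (z + h) - p z - (∑ n ∈ Finset.Icc 1 N, f n) h
      = ∑ n ∈ Finset.Icc 1 N, (F n (fun _ => z + h) - F n (fun _ => z) - f n h) := by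
    rw [hF, hF, ContinuousLinearMap.sum_apply, Finset.sum_sub_distrib, Finset.sum_sub_distrib]
    ring
  rw [e, Finset.sum_mul]
  exact (Finset.abs_sum_le_sum_abs _ _).trans (Finset.sum_le_sum fun n _ => hf n h hh)

/-- The averaging argument, valid for every function with a first order Taylor expansion whose
remainder is uniformly quadratic on the unit ball. -/
lemma exists_norm_add_ge_of_taylor
    {X : Type*} [NormedAddCommGroup X] [NormedSpace ℝ X]
    (hDP : ∀ (f : X →L[ℝ] ℝ) (y₀ : X),
      ‖ContinuousLinearMap.id ℝ X + f.smulRight y₀‖ = 1 + ‖f‖ * ‖y₀‖)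
    (q : X → ℝ) (C : ℝ) (hC : 0 ≤ C)
    (hq : ∀ z : X, ‖z‖ ≤ 1 → ∃ f : X →L[ℝ] ℝ, ∀ h : X, ‖h‖ ≤ 1 →
      |q (z + h) - q z - f h| ≤ C * ‖h‖ ^ 2)
    (x y₀ : X) (hx : ‖x‖ = 1) (hy₀ : ‖y₀‖ ≤ 1) (η : ℝ) (hη : 0 < η) (hη1 : η ≤ 1) :
    ∃ w : X, ‖w‖ ≤ 1 ∧ q y₀ - η ≤ q w ∧ 2 - η ≤ ‖x + w‖ := by
  -- `t = 1 / m` is the step size.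
  obtain ⟨m, hm⟩ := exists_nat_ge (max 2 (8 * C / η))
  have hm2 : (2 : ℝ) ≤ m := (le_max_left _ _).trans hm
  have hm0 : (0 : ℝ) < m := by linarith
  obtain ⟨t, ht, htm⟩ : ∃ t : ℝ, 0 < t ∧ m * t = 1 :=
    ⟨(m : ℝ)⁻¹, by positivity, mul_inv_cancel₀ hm0.ne'⟩
  have ht2 : 2 * t ≤ 1 := by nlinarith
  have hCt : 8 * C * t ≤ η := by
    have : 8 * C ≤ m * η := by
      rw [← div_le_iff₀ hη]; exact (le_max_right _ _).trans hm
    calc 8 * C * t ≤ m * η * t := by gcongr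
      _ = m * t * η := by ring
      _ = η := by rw [htm, one_mul]
  have main : ∀ k : ℕ, k ≤ m → ∃ w : X, ‖w‖ ≤ k * t ∧
      q y₀ - k * t * η ≤ q ((1 - k * t) • y₀ + w) ∧
      1 + k * t - k * t * η ≤ ‖x + w‖ := by
    intro k
    induction k with
    | zero => exact fun _ => ⟨0, by simp, by simp, by simp [hx]⟩
    | succ k ih =>
      intro hk
      obtain ⟨w, hw, hqw, hxw⟩ := ih (by omega)
      have hk' : ((k : ℝ) + 1) ≤ m := by exact_mod_cast hk
      have hkt0 : 0 ≤ k * t := by positivity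
      have hkt : (k : ℝ) * t ≤ 1 - t := by nlinarith
      set z := (1 - k * t) • y₀ + w with hz
      have hz1 : ‖z‖ ≤ 1 := by
        refine (norm_add_le _ _).trans ?_
        rw [norm_smul, Real.norm_of_nonneg (by linarith)]
        nlinarith
      obtain ⟨f, hf⟩ := hq z hz1
      have hu1 : 1 ≤ ‖x + w‖ := by nlinarith
      have hu2 : ‖x + w‖ ≤ 2 := (norm_add_le _ _).trans (by linarith)
      have hu0 : x + w ≠ 0 := norm_pos_iff.1 (by linarith)
      obtain ⟨y, hy, hfy, huy⟩ := exists_mem_slice_norm_add_ge hDP f (x + w) hu0 hu2 t ht.le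
        (by linarith) (t * η / 2) (by positivity)
      have hd : ‖y - y₀‖ ≤ 2 := (norm_sub_le _ _).trans (by linarith)
      have hth : ‖t • (y - y₀)‖ ≤ 2 * t := by
        rw [norm_smul, Real.norm_of_nonneg ht.le]; nlinarith
      refine ⟨w + t • y, ?_, ?_, ?_⟩
      · refine (norm_add_le _ _).trans ?_
        rw [norm_smul, Real.norm_of_nonneg ht.le]
        push_cast
        nlinarith
      · have e : (1 - ((k + 1 : ℕ) : ℝ) * t) • y₀ + (w + t • y) = z + t • (y - y₀) := by
          rw [hz]; push_cast; module
        rw [e]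
        have h1 := (abs_le.1 (hf (t • (y - y₀)) (hth.trans ht2))).1
        have h2 : C * ‖t • (y - y₀)‖ ^ 2 ≤ t * η / 2 := by
          calc C * ‖t • (y - y₀)‖ ^ 2 ≤ C * (2 * t) ^ 2 := by gcongr
            _ = t * (8 * C * t) / 2 := by ring
            _ ≤ t * η / 2 := by gcongr
        have h3 : f y₀ ≤ ‖f‖ := by
          have := f.le_opNorm y₀
          nlinarith [Real.le_norm_self (f y₀), norm_nonneg f]
        have h4 : -(t * η / 2) ≤ f (t • (y - y₀)) := by
          rw [map_smul, map_sub, smul_eq_mul]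
          have : 0 < t * η / 2 := by positivity
          nlinarith
        push_cast
        linarith
      · rw [← add_assoc]
        push_cast
        have : 0 < t * η := by positivity
        linarith
  obtain ⟨w, h1, h2, h3⟩ := main m le_rfl
  rw [htm] at h1 h2 h3
  refine ⟨w, h1, by simpa using h2, by linarith⟩

/-- a real Banach space with the Daugavet property satisfies the geometric
characterization of the polynomial Daugavet property. -/
theorem daugavet_implies_polynomial_geometric_condition
    {X : Type*} [NormedAddCommGroup X] [NormedSpace ℝ X] [CompleteSpace X]
    (hDP : ∀ (f : X →L[ℝ] ℝ) (y₀ : X),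
      ‖ContinuousLinearMap.id ℝ X + f.smulRight y₀‖ = 1 + ‖f‖ * ‖y₀‖) :
    ∀ (x : X), ‖x‖ = 1 → ∀ ε > (0 : ℝ),
      ∀ (p : X → ℝ), IsScalarPoly p →
        (⨆ z : {z : X // ‖z‖ ≤ 1}, |p z|) = 1 →
          ∃ (y : X) (ω : ℝ), ‖y‖ ≤ 1 ∧ (ω = 1 ∨ ω = -1) ∧
            ω * p y > 1 - ε ∧ ‖x + ω • y‖ > 2 - ε := by
  intro x hx ε hε p hp hsup
  obtain ⟨C, hC, hT⟩ := hp.exists_taylor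
  obtain ⟨η, hη, hη1, hηε⟩ : ∃ η : ℝ, 0 < η ∧ η ≤ 1 ∧ 2 * η ≤ ε :=
    ⟨min 1 (ε / 2), by positivity, min_le_left _ _, by linarith [min_le_right 1 (ε / 2)]⟩
  have : Nonempty {z : X // ‖z‖ ≤ 1} := ⟨⟨0, by simp⟩⟩
  obtain ⟨⟨y₀, hy₀⟩, hpy⟩ := exists_lt_of_lt_ciSup
    (show 1 - η < ⨆ z : {z : X // ‖z‖ ≤ 1}, |p z| by rw [hsup]; linarith)
  obtain ⟨ω, hω, hωp⟩ : ∃ ω : ℝ, (ω = 1 ∨ ω = -1) ∧ ω * p y₀ = |p y₀| := by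
    rcases abs_choice (p y₀) with h | h
    · exact ⟨1, .inl rfl, by rw [h, one_mul]⟩
    · exact ⟨-1, .inr rfl, by rw [h, neg_one_mul]⟩
  have hωabs : |ω| = 1 := by rcases hω with rfl | rfl <;> simp
  have hωω : ω * ω = 1 := by rcases hω with rfl | rfl <;> simp
  obtain ⟨w, hw, hqw, hxw⟩ := exists_norm_add_ge_of_taylor hDP (fun z => ω * p z) C hC
    (fun z hz => by
      obtain ⟨f, hf⟩ := hT z hz
      refine ⟨ω • f, fun h hh => ?_⟩
      have e : ω * p (z + h) - ω * p z - (ω • f) h = ω * (p (z + h) - p z - f h) := by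
        rw [ContinuousLinearMap.smul_apply, smul_eq_mul]; ring
      rw [e, abs_mul, hωabs, one_mul]
      exact hf h hh)
    (ω • x) y₀ (by rw [norm_smul, Real.norm_eq_abs, hωabs, hx, one_mul]) hy₀ η hη hη1
  refine ⟨w, ω, hw, hω, ?_, ?_⟩
  · simp only [hωp] at hqw hpy
    linarith
  · have e : x + ω • w = ω • (ω • x + w) := by
      rw [smul_add, smul_smul, hωω, one_smul]
    rw [e, norm_smul, Real.norm_eq_abs, hωabs, one_mul]
    linarith
end

section
/- Let X be a real Banach space with the Daugavet property. Then for every continuous scalar polynomial p on X, the supremum of |p| over the closed unit ball equals the supremum of |p| over the unit sphere: sup_{‖x‖≤1} |p(x)| = sup_{‖x‖=1} |p(x)|. -/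
/-! ### Second-order smoothness of polynomials on the ball -/

/-- `p` is `C²` and its second derivative is bounded on the closed unit ball. -/
def HasBddSecondDeriv {X : Type*} [NormedAddCommGroup X] [NormedSpace ℝ X] (p : X → ℝ) : Prop :=
  ContDiff ℝ 2 p ∧ ∃ C : ℝ, ∀ x : X, ‖x‖ ≤ 1 → ‖iteratedFDeriv ℝ 2 p x‖ ≤ C

section

variable {X : Type*} [NormedAddCommGroup X] [NormedSpace ℝ X]

lemma HasBddSecondDeriv.add {p q : X → ℝ} (hp : HasBddSecondDeriv p) (hq : HasBddSecondDeriv q) :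
    HasBddSecondDeriv (p + q) := by
  obtain ⟨hp, C, hC⟩ := hp
  obtain ⟨hq, D, hD⟩ := hq
  refine ⟨hp.add hq, C + D, fun x hx => ?_⟩
  rw [iteratedFDeriv_add hp hq]
  exact (norm_add_le _ _).trans (add_le_add (hC x hx) (hD x hx))

lemma HasBddSecondDeriv.neg {p : X → ℝ} (hp : HasBddSecondDeriv p) :
    HasBddSecondDeriv (-p) := by
  obtain ⟨hp, C, hC⟩ := hp
  refine ⟨hp.neg, C, fun x hx => ?_⟩
  rw [iteratedFDeriv_neg, Pi.neg_apply, norm_neg]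
  exact hC x hx

lemma HasBddSecondDeriv.const (c : ℝ) : HasBddSecondDeriv (fun _ : X => c) := by
  refine ⟨contDiff_const, 0, fun x _ => ?_⟩
  rw [iteratedFDeriv_const_of_ne (by norm_num)]
  simp

/-- The diagonal of a multilinear form is its composition with the linear map `x ↦ (x, …, x)`. -/
lemma HasBddSecondDeriv.multilinear {n : ℕ}
    (F : ContinuousMultilinearMap ℝ (fun _ : Fin n => X) ℝ) :
    HasBddSecondDeriv (fun x : X => F (fun _ => x)) := by
  let L : X →L[ℝ] (Fin n → X) := ContinuousLinearMap.pi fun _ => ContinuousLinearMap.id ℝ X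
  have hF : ContDiff ℝ 2 (fun m : Fin n → X => F m) := F.contDiff
  refine ⟨hF.comp L.contDiff, (n.descFactorial 2 * ‖F‖) * ‖L‖ ^ 2, fun x hx => ?_⟩
  have h1 : iteratedFDeriv ℝ 2 (fun x : X => F (fun _ => x)) x
      = (iteratedFDeriv ℝ 2 (fun m : Fin n → X => F m) (L x)).compContinuousLinearMap
          fun _ => L :=
    L.iteratedFDeriv_comp_right hF x le_rfl
  rw [h1]
  refine (ContinuousMultilinearMap.norm_compContinuousLinearMap_le _ _).trans ?_
  rw [Finset.prod_const, Finset.card_univ, Fintype.card_fin]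
  gcongr
  refine (F.norm_iteratedFDeriv_le 2 _).trans ?_
  rw [Fintype.card_fin]
  have hL : ‖L x‖ ≤ 1 := (pi_norm_le_iff_of_nonneg zero_le_one).2 fun _ => hx
  exact mul_le_of_le_one_right (by positivity) (pow_le_one₀ (norm_nonneg _) hL)

lemma IsScalarPoly.hasBddSecondDeriv {p : X → ℝ} (hp : IsScalarPoly p) :
    HasBddSecondDeriv p := by
  obtain ⟨N, c, F, h⟩ := hp
  have key : ∀ s : Finset ℕ, HasBddSecondDeriv (fun x : X => ∑ n ∈ s, F n (fun _ => x)) := by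
    intro s
    induction s using Finset.induction_on with
    | empty => simpa using HasBddSecondDeriv.const (X := X) 0
    | insert a s ha ih =>
      simp only [Finset.sum_insert ha]
      exact (HasBddSecondDeriv.multilinear (F a)).add ih
  have : p = (fun _ => c) + fun x : X => ∑ n ∈ Finset.Icc 1 N, F n (fun _ => x) := funext h
  rw [this]
  exact (HasBddSecondDeriv.const c).add (key _)

/-- First-order Taylor estimate on the unit ball, uniform in the base point, together with a bound
on the derivative. -/
lemma HasBddSecondDeriv.taylor_bound {p : X → ℝ} (hp : HasBddSecondDeriv p) :
    ∃ M : ℝ, 0 ≤ M ∧ (∀ w : X, ‖w‖ ≤ 1 → ‖fderiv ℝ p w‖ ≤ M) ∧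
      ∀ w u : X, ‖w‖ ≤ 1 → ‖u‖ ≤ 1 →
        p w + fderiv ℝ p w (u - w) - M * ‖u - w‖ ^ 2 ≤ p u := by
  obtain ⟨hp, C, hC⟩ := hp
  have hC0 : 0 ≤ C := (norm_nonneg _).trans (hC 0 (by simp))
  have hp1 : ContDiff ℝ 1 (fderiv ℝ p) := hp.fderiv_right (by norm_num)
  have hd : ∀ x : X, ‖x‖ ≤ 1 → ‖fderiv ℝ (fderiv ℝ p) x‖ ≤ C := by
    intro x hx
    rw [← norm_iteratedFDeriv_one, norm_iteratedFDeriv_fderiv]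
    exact hC x hx
  have hconv : Convex ℝ (Metric.closedBall (0 : X) 1) := convex_closedBall _ _
  have hlip : ∀ w u : X, ‖w‖ ≤ 1 → ‖u‖ ≤ 1 →
      ‖fderiv ℝ p u - fderiv ℝ p w‖ ≤ C * ‖u - w‖ := fun w u hw hu =>
    hconv.norm_image_sub_le_of_norm_fderiv_le
      (fun x _ => hp1.differentiable (by norm_num) x) (fun x hx => hd x (by simpa using hx))
      (by simpa using hw) (by simpa using hu)
  refine ⟨‖fderiv ℝ p 0‖ + C, by positivity, fun w hw => ?_, fun w u hw hu => ?_⟩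
  · have h1 := hlip 0 w (by simp) hw
    rw [sub_zero] at h1
    have h2 := norm_sub_norm_le (fderiv ℝ p w) (fderiv ℝ p 0)
    nlinarith
  · -- On the part of the ball within `‖u - w‖` of `w`, the derivative varies by `C * ‖u - w‖`.
    have hs : Convex ℝ (Metric.closedBall (0 : X) 1 ∩ Metric.closedBall w ‖u - w‖) :=
      hconv.inter (convex_closedBall _ _)
    have h1 := hs.norm_image_sub_le_of_norm_hasFDerivWithin_le' (f := p) (f' := fderiv ℝ p)
      (C := C * ‖u - w‖) (φ := fderiv ℝ p w) (x := w) (y := u)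
      (fun x _ => (hp.differentiable (by norm_num) x).hasFDerivAt.hasFDerivWithinAt)
      (fun x hx => by
        have hx1 : ‖x‖ ≤ 1 := by simpa using hx.1
        have hx2 : ‖x - w‖ ≤ ‖u - w‖ := by simpa [dist_eq_norm] using hx.2
        exact (hlip w x hw hx1).trans (by gcongr))
      ⟨by simpa using hw, by simp⟩ ⟨by simpa using hu, by simp [dist_eq_norm]⟩
    have h2 := (abs_le.1 (Real.norm_eq_abs _ ▸ h1)).1
    have h3 : 0 ≤ ‖fderiv ℝ p 0‖ * ‖u - w‖ ^ 2 := by positivity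
    nlinarith

/-! ### Slices in spaces with the Daugavet property -/

/-- In a space with the Daugavet property, each slice of the unit ball contains points almost
`ℓ₁`-orthogonal to a given `y ≠ 0`. -/
lemma exists_mem_slice_aux
    (hDP : ∀ (f : X →L[ℝ] ℝ) (y₀ : X),
      ‖ContinuousLinearMap.id ℝ X + f.smulRight y₀‖ = 1 + ‖f‖ * ‖y₀‖)
    (g : X →L[ℝ] ℝ) (hg : ‖g‖ = 1) (y : X) (hy : y ≠ 0) {ε : ℝ} (hε : 0 < ε) :
    ∃ x : X, ‖x‖ ≤ 1 ∧ ‖y‖ + 1 - ε ≤ ‖y + x‖ ∧ 1 - ε ≤ g x := by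
  have hy0 : 0 < ‖y‖ := norm_pos_iff.2 hy
  obtain ⟨η, hη, h1, h2⟩ : ∃ η : ℝ, 0 < η ∧ 2 * η ≤ ε ∧ η ≤ ε * ‖y‖ :=
    ⟨min (ε / 2) (ε * ‖y‖), by positivity, by linarith [min_le_left (ε / 2) (ε * ‖y‖)],
      min_le_right _ _⟩
  obtain ⟨x, hx, hTx⟩ : ∃ x : X, ‖x‖ < 1 ∧ 1 + ‖y‖ - η < ‖x + g x • y‖ := by
    have := hDP g y
    exact ContinuousLinearMap.exists_lt_apply_of_lt_opNorm
      (ContinuousLinearMap.id ℝ X + g.smulRight y) (by rw [this, hg]; linarith)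
  -- Replacing `x` by `-x` if needed, `g x` may be taken nonnegative.
  wlog hgx : 0 ≤ g x generalizing x
  · refine this (-x) (by simpa using hx) ?_ (by rw [map_neg]; linarith)
    rw [map_neg, neg_smul, ← neg_add, norm_neg]
    exact hTx
  have h3 : g x ≤ 1 := by
    have := g.le_opNorm x
    rw [hg, one_mul, Real.norm_eq_abs] at this
    linarith [le_abs_self (g x)]
  have h4 : ‖x + g x • y‖ ≤ 1 + g x * ‖y‖ := by
    refine (norm_add_le _ _).trans ?_
    rw [norm_smul, Real.norm_of_nonneg hgx]
    linarith
  have h5 : (1 - g x) * ‖y‖ ≤ η := by nlinarith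
  refine ⟨x, hx.le, ?_, ?_⟩
  · have h6 : x + g x • y = (y + x) - (1 - g x) • y := by module
    have h7 := norm_sub_le (y + x) ((1 - g x) • y)
    rw [← h6, norm_smul, Real.norm_of_nonneg (by linarith)] at h7
    linarith
  · have : (1 - g x) * ‖y‖ ≤ ε * ‖y‖ := h5.trans h2
    linarith [le_of_mul_le_mul_right this hy0]

/-- The slice lemma for arbitrary `f` and `y`, including the degenerate cases `f = 0` and `y = 0`. -/
lemma exists_mem_slice_s9 [Nontrivial X]
    (hDP : ∀ (f : X →L[ℝ] ℝ) (y₀ : X),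
      ‖ContinuousLinearMap.id ℝ X + f.smulRight y₀‖ = 1 + ‖f‖ * ‖y₀‖)
    (f : X →L[ℝ] ℝ) (y : X) {ε : ℝ} (hε : 0 < ε) :
    ∃ x : X, ‖x‖ ≤ 1 ∧ ‖y‖ + 1 - ε ≤ ‖y + x‖ ∧ (1 - ε) * ‖f‖ ≤ f x := by
  have step : ∀ g : X →L[ℝ] ℝ, ‖g‖ = 1 →
      ∃ x : X, ‖x‖ ≤ 1 ∧ ‖y‖ + 1 - ε ≤ ‖y + x‖ ∧ 1 - ε ≤ g x := by
    intro g hg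
    rcases eq_or_ne y 0 with rfl | hy
    · obtain ⟨e, he⟩ := exists_norm_eq X (zero_le_one (α := ℝ))
      obtain ⟨x, h1, h2, h3⟩ := exists_mem_slice_aux hDP g hg e
        (norm_ne_zero_iff.1 (by rw [he]; exact one_ne_zero)) hε
      refine ⟨x, h1, ?_, h3⟩
      have := norm_add_le e x
      rw [norm_zero, zero_add, zero_add]
      linarith
    · exact exists_mem_slice_aux hDP g hg y hy hε
  rcases eq_or_ne f 0 with rfl | hf
  · obtain ⟨e, he⟩ := exists_norm_eq X (zero_le_one (α := ℝ))
    have he0 : ‖e‖ ≠ 0 := by rw [he]; exact one_ne_zero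
    obtain ⟨g, hg, -⟩ := exists_dual_vector ℝ e he0
    obtain ⟨x, h1, h2, -⟩ := step g hg
    exact ⟨x, h1, h2, by simp⟩
  · have hf0 : 0 < ‖f‖ := norm_pos_iff.2 hf
    obtain ⟨x, h1, h2, h3⟩ := step (‖f‖⁻¹ • f) (by
      rw [norm_smul, norm_inv, norm_norm, inv_mul_cancel₀ hf0.ne'])
    refine ⟨x, h1, h2, ?_⟩
    rw [smul_apply, smul_eq_mul, inv_mul_eq_div, le_div_iff₀ hf0] at h3
    exact h3

/-! ### Gradient ascent to the sphere -/

/-- The ascent: `s` is the sum of the first `k` chosen points `z₁, …, z_k`, and `p` is evaluated at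
the average of these points and of `N - k` copies of `x₀`. -/
lemma exists_sum_near [Nontrivial X]
    (hDP : ∀ (f : X →L[ℝ] ℝ) (y₀ : X),
      ‖ContinuousLinearMap.id ℝ X + f.smulRight y₀‖ = 1 + ‖f‖ * ‖y₀‖)
    {p : X → ℝ} {M : ℝ} (hM0 : 0 ≤ M) (hM : ∀ w : X, ‖w‖ ≤ 1 → ‖fderiv ℝ p w‖ ≤ M)
    (hT : ∀ w u : X, ‖w‖ ≤ 1 → ‖u‖ ≤ 1 →
        p w + fderiv ℝ p w (u - w) - M * ‖u - w‖ ^ 2 ≤ p u)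
    {x₀ : X} (hx₀ : ‖x₀‖ ≤ 1) {N : ℕ} (hN : 0 < N) {ε : ℝ} (hε : 0 < ε) (k : ℕ) (hk : k ≤ N) :
    ∃ s : X, ‖s‖ ≤ k ∧ k * (1 - ε) ≤ ‖s‖ ∧
      p x₀ - k * (4 * M / N ^ 2 + M * ε / N) ≤
        p ((N : ℝ)⁻¹ • (s + ((N : ℝ) - k) • x₀)) := by
  have hN0 : (0 : ℝ) < N := by exact_mod_cast hN
  have hball : ∀ (j : ℕ) (t : X), j ≤ N → ‖t‖ ≤ j →
      ‖(N : ℝ)⁻¹ • (t + ((N : ℝ) - j) • x₀)‖ ≤ 1 := by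
    intro j t hj ht
    have hj' : (j : ℝ) ≤ N := by exact_mod_cast hj
    rw [norm_smul, norm_inv, Real.norm_of_nonneg hN0.le, inv_mul_le_iff₀ hN0, mul_one]
    refine (norm_add_le _ _).trans ?_
    rw [norm_smul, Real.norm_of_nonneg (by linarith)]
    nlinarith
  induction k with
  | zero =>
    refine ⟨0, by simp, by simp, ?_⟩
    simp [smul_smul, inv_mul_cancel₀ hN0.ne']
  | succ k ih =>
    obtain ⟨s, hs1, hs2, hs3⟩ := ih (by omega)
    set w : X := (N : ℝ)⁻¹ • (s + ((N : ℝ) - k) • x₀) with hw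
    have hw1 : ‖w‖ ≤ 1 := hball k s (by omega) hs1
    obtain ⟨z, hz1, hz2, hz3⟩ := exists_mem_slice_s9 hDP (fderiv ℝ p w) s hε
    have hsz : ‖s + z‖ ≤ (k + 1 : ℕ) := by
      push_cast
      exact (norm_add_le _ _).trans (by linarith)
    refine ⟨s + z, hsz, by push_cast; linarith, ?_⟩
    set u : X := (N : ℝ)⁻¹ • (s + z + ((N : ℝ) - (k + 1 : ℕ)) • x₀) with hu
    have hu1 : ‖u‖ ≤ 1 := hball (k + 1) _ hk hsz
    have huw : u - w = (N : ℝ)⁻¹ • (z - x₀) := by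
      rw [hu, hw]
      push_cast
      module
    have h1 := hT w u hw1 hu1
    have h2 : ‖u - w‖ ^ 2 ≤ 4 / (N : ℝ) ^ 2 := by
      have : ‖u - w‖ ≤ 2 / N := by
        rw [huw, norm_smul, norm_inv, Real.norm_of_nonneg hN0.le, inv_mul_eq_div]
        gcongr
        exact (norm_sub_le _ _).trans (by linarith)
      calc ‖u - w‖ ^ 2 ≤ (2 / (N : ℝ)) ^ 2 := by gcongr
        _ = 4 / (N : ℝ) ^ 2 := by rw [div_pow]; norm_num
    have h3 : -(M * ε) ≤ fderiv ℝ p w (z - x₀) := by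
      have h4 : fderiv ℝ p w x₀ ≤ ‖fderiv ℝ p w‖ := by
        have := (fderiv ℝ p w).le_opNorm x₀
        have h5 := le_abs_self (fderiv ℝ p w x₀)
        rw [Real.norm_eq_abs] at this
        nlinarith [norm_nonneg (fderiv ℝ p w)]
      have h6 := mul_le_mul_of_nonneg_right (hM w hw1) hε.le
      rw [map_sub]
      nlinarith
    have h4 : -(M * ε / N) ≤ fderiv ℝ p w (u - w) := by
      rw [huw, map_smul, smul_eq_mul, inv_mul_eq_div, ← neg_div]
      gcongr
    have h5 : M * ‖u - w‖ ^ 2 ≤ 4 * M / N ^ 2 := by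
      calc M * ‖u - w‖ ^ 2 ≤ M * (4 / N ^ 2) := by gcongr
        _ = 4 * M / N ^ 2 := by ring
    push_cast
    linarith

/-- Each value of `p` on the ball is almost reached from below on the sphere. -/
lemma exists_sphere_near [Nontrivial X]
    (hDP : ∀ (f : X →L[ℝ] ℝ) (y₀ : X),
      ‖ContinuousLinearMap.id ℝ X + f.smulRight y₀‖ = 1 + ‖f‖ * ‖y₀‖)
    {p : X → ℝ} (hp : HasBddSecondDeriv p) {x₀ : X} (hx₀ : ‖x₀‖ ≤ 1) {δ : ℝ} (hδ : 0 < δ) :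
    ∃ z : X, ‖z‖ = 1 ∧ p x₀ - δ ≤ p z := by
  obtain ⟨M, hM0, hM, hT⟩ := hp.taylor_bound
  -- The total loss is at most `4 * M / N + M * ε` in the ascent, and `2 * M * ε` in normalising.
  obtain ⟨N, hN⟩ := exists_nat_gt (8 * (M + 1) / δ)
  have hN0 : (0 : ℝ) < N := lt_trans (by positivity) hN
  obtain ⟨ε, hε, hε1, hε2⟩ : ∃ ε : ℝ, 0 < ε ∧ ε ≤ 1 / 2 ∧ 3 * M * ε ≤ δ / 2 := by
    refine ⟨min (1 / 2) (δ / (6 * (M + 1))), by positivity, min_le_left _ _, ?_⟩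
    have h := min_le_right (1 / 2) (δ / (6 * (M + 1)))
    rw [le_div_iff₀ (by positivity)] at h
    have h0 : 0 < min (1 / 2) (δ / (6 * (M + 1))) := by positivity
    nlinarith
  obtain ⟨s, hs1, hs2, hs3⟩ := exists_sum_near hDP hM0 hM hT hx₀
    (by exact_mod_cast hN0) hε N le_rfl
  rw [sub_self, zero_smul, add_zero] at hs3
  obtain ⟨z, hz⟩ : ∃ z : X, z = (N : ℝ)⁻¹ • s := ⟨_, rfl⟩
  rw [← hz] at hs3
  have hzn : ‖z‖ = ‖s‖ / N := by
    rw [hz, norm_smul, norm_inv, Real.norm_of_nonneg hN0.le, inv_mul_eq_div]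
  have hz1 : ‖z‖ ≤ 1 := by rw [hzn, div_le_one hN0]; exact hs1
  have hz2 : 1 - ε ≤ ‖z‖ := by rw [hzn, le_div_iff₀ hN0]; linarith
  have hz0 : 0 < ‖z‖ := by linarith
  have hv : ‖‖z‖⁻¹ • z‖ = 1 := by
    rw [norm_smul, norm_inv, norm_norm, inv_mul_cancel₀ hz0.ne']
  refine ⟨‖z‖⁻¹ • z, hv, ?_⟩
  have hd : ‖‖z‖⁻¹ • z - z‖ ≤ ε := by
    have h1 : ‖z‖⁻¹ • z - z = (1 - ‖z‖) • (‖z‖⁻¹ • z) := by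
      rw [sub_smul, one_smul, smul_smul, mul_inv_cancel₀ hz0.ne', one_smul]
    rw [h1, norm_smul, hv, mul_one, Real.norm_of_nonneg (by linarith)]
    linarith
  have h1 := hT z (‖z‖⁻¹ • z) hz1 hv.le
  have h2 : -(M * ε) ≤ fderiv ℝ p z (‖z‖⁻¹ • z - z) := by
    have h3 := (fderiv ℝ p z).le_opNorm (‖z‖⁻¹ • z - z)
    have h4 : ‖fderiv ℝ p z‖ * ‖‖z‖⁻¹ • z - z‖ ≤ M * ε :=
      mul_le_mul (hM z hz1) hd (norm_nonneg _) hM0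
    exact (abs_le.1 (h3.trans h4)).1
  have h3 : M * ‖‖z‖⁻¹ • z - z‖ ^ 2 ≤ M * ε := by
    gcongr
    calc ‖‖z‖⁻¹ • z - z‖ ^ 2 ≤ ε ^ 2 := by gcongr
      _ ≤ ε := by nlinarith
  have h4 : (N : ℝ) * (4 * M / N ^ 2 + M * ε / N) = 4 * M / N + M * ε := by
    field_simp
  have h5 : 4 * M / N ≤ δ / 2 := by
    rw [div_lt_iff₀ hδ] at hN
    rw [div_le_iff₀ hN0]
    nlinarith
  rw [h4] at hs3
  linarith

lemma HasBddSecondDeriv.exists_abs_le {p : X → ℝ} (hp : HasBddSecondDeriv p) :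
    ∃ K : ℝ, ∀ x : X, ‖x‖ ≤ 1 → |p x| ≤ K := by
  have lower : ∀ q : X → ℝ, HasBddSecondDeriv q → ∃ K : ℝ, ∀ x : X, ‖x‖ ≤ 1 → K ≤ q x := by
    intro q hq
    obtain ⟨M, hM0, hM, hT⟩ := hq.taylor_bound
    refine ⟨q 0 - M - M, fun x hx => ?_⟩
    have h1 := hT 0 x (by simp) hx
    rw [sub_zero] at h1
    have h2 : ‖fderiv ℝ q 0‖ * ‖x‖ ≤ M * 1 :=
      mul_le_mul (hM 0 (by simp)) hx (norm_nonneg _) hM0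
    have h3 := (abs_le.1 (((fderiv ℝ q 0).le_opNorm x).trans h2)).1
    have h4 : M * ‖x‖ ^ 2 ≤ M := mul_le_of_le_one_right hM0 (pow_le_one₀ (norm_nonneg _) hx)
    linarith
  obtain ⟨K, hK⟩ := lower p hp
  obtain ⟨L, hL⟩ := lower (-p) hp.neg
  refine ⟨max (-K) (-L), fun x hx => abs_le.2 ⟨?_, ?_⟩⟩
  · linarith [hK x hx, le_max_left (-K) (-L)]
  · have := hL x hx
    rw [Pi.neg_apply] at this
    linarith [le_max_right (-K) (-L)]

end

/-! ### Equality of the suprema -/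

/-- in a real Banach space with the Daugavet property, the supremum of `|p|`
over the closed unit ball equals its supremum over the unit sphere, for every continuous
scalar polynomial `p`. -/
theorem daugavet_poly_norm_attained_on_sphere
    {X : Type*} [NormedAddCommGroup X] [NormedSpace ℝ X] [CompleteSpace X]
    (hDP : ∀ (f : X →L[ℝ] ℝ) (y₀ : X),
      ‖ContinuousLinearMap.id ℝ X + f.smulRight y₀‖ = 1 + ‖f‖ * ‖y₀‖) :
    ∀ (p : X → ℝ), IsScalarPoly p →
      (⨆ x : {x : X // ‖x‖ ≤ 1}, |p x|) = (⨆ x : {x : X // ‖x‖ = 1}, |p x|) := by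
  intro p hpoly
  have hp := hpoly.hasBddSecondDeriv
  -- On the zero space the identity has norm `0`, so the Daugavet equation fails there.
  have : Nontrivial X := by
    by_contra hX
    rw [not_nontrivial_iff_subsingleton] at hX
    have h := hDP 0 0
    rw [Subsingleton.elim (ContinuousLinearMap.id ℝ X + _) 0] at h
    simp at h
  obtain ⟨K, hK⟩ := hp.exists_abs_le
  have hbB : BddAbove (Set.range fun x : {x : X // ‖x‖ ≤ 1} => |p x|) :=
    ⟨K, by rintro _ ⟨x, rfl⟩; exact hK x x.2⟩
  have hbS : BddAbove (Set.range fun x : {x : X // ‖x‖ = 1} => |p x|) :=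
    ⟨K, by rintro _ ⟨x, rfl⟩; exact hK x x.2.le⟩
  obtain ⟨e, he⟩ := exists_norm_eq X (zero_le_one (α := ℝ))
  have : Nonempty {x : X // ‖x‖ ≤ 1} := ⟨⟨e, he.le⟩⟩
  have : Nonempty {x : X // ‖x‖ = 1} := ⟨⟨e, he⟩⟩
  apply le_antisymm
  · refine ciSup_le fun x => le_of_forall_pos_le_add fun δ hδ => ?_
    rcases abs_cases (p x) with ⟨h, -⟩ | ⟨h, -⟩
    · obtain ⟨z, hz, hpz⟩ := exists_sphere_near hDP hp x.2 hδ
      have h1 : |p z| ≤ _ := le_ciSup hbS ⟨z, hz⟩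
      linarith [le_abs_self (p z)]
    · obtain ⟨z, hz, hpz⟩ := exists_sphere_near hDP hp.neg x.2 hδ
      have h1 : |p z| ≤ _ := le_ciSup hbS ⟨z, hz⟩
      rw [Pi.neg_apply, Pi.neg_apply] at hpz
      linarith [neg_abs_le (p z)]
  · exact ciSup_le fun x => le_ciSup hbB ⟨x.1, x.2.le⟩
end

section
/- Let X and Y be real Banach spaces and let G : X → Y be a bounded linear operator with ‖G‖ = 1. Then G is a Daugavet center (i.e., ‖G + T‖ = 1 + ‖f‖·‖y₀‖ for every rank-one operator T(x) = f(x)·y₀ with f a continuous linear functional on X and y₀ ∈ Y) if and only if for every y ∈ S_Y, every continuous linear functional f on X with ‖f‖ = 1, every α > 0 and every ε > 0, there exists x ∈ B_X with f(x) > 1 − α and ‖y + G(x)‖ > 2 − ε. -/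
/-!
Both directions are a triangle-inequality argument about `G + f ⊗ y`.

If `‖G + f ⊗ y‖ = 2` with `‖f‖ = ‖y‖ = 1`, an almost norming vector `x` of the unit ball, with the
sign chosen so that `f x ≥ 0`, must have `f x` close to `1`, because `‖G x‖ ≤ 1`. Hence `x` lies in
the slice, and replacing `f x • y` by `y` costs little.

Conversely, a vector `x` in a thin slice of `f / ‖f‖` for which `u = y₀ / ‖y₀‖` and `G x` almost
add up in norm, `‖u + G x‖ ≈ 2`, also satisfies `‖a • u + G x‖ ≈ a + 1` for
`a = ‖f‖ * ‖y₀‖` (`le_norm_smul_add`); and `f x • y₀` is close to `a • u`.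
-/

/-- If two vectors of the unit ball almost add up in norm, then so does every combination
`a • u + v` with `a ≥ 0`. -/
lemma le_norm_smul_add {Y : Type*} [NormedAddCommGroup Y] [NormedSpace ℝ Y] {u v : Y}
    (hu : ‖u‖ ≤ 1) (hv : ‖v‖ ≤ 1) {a δ : ℝ} (ha : 0 ≤ a) (hδ : 0 ≤ δ) (h : 2 - δ ≤ ‖u + v‖) :
    1 + a - (1 + a) * δ ≤ ‖a • u + v‖ := by
  rcases le_total a 1 with h1 | h1
  · have e : u + v = (a • u + v) + (1 - a) • u := by module
    have n := norm_add_le (a • u + v) ((1 - a) • u)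
    rw [← e, norm_smul, Real.norm_of_nonneg (by linarith)] at n
    nlinarith [mul_nonneg ha hδ]
  · have e : a • (u + v) = (a • u + v) + (a - 1) • v := by module
    have n := norm_add_le (a • u + v) ((a - 1) • v)
    rw [← e, norm_smul, norm_smul, Real.norm_of_nonneg ha,
      Real.norm_of_nonneg (by linarith)] at n
    nlinarith [mul_le_mul_of_nonneg_left h ha]

/-- geometric characterization of Daugavet centers: a norm-one operator
`G : X → Y` is a Daugavet center iff for every `y ∈ S_Y` and every slice of `B_X` there is
a point `x` of the slice with `‖y + G x‖` close to `2`. -/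
theorem daugavet_center_characterization
    {X Y : Type*} [NormedAddCommGroup X] [NormedSpace ℝ X] [CompleteSpace X]
    [NormedAddCommGroup Y] [NormedSpace ℝ Y] [CompleteSpace Y]
    (G : X →L[ℝ] Y) (hG : ‖G‖ = 1) :
    (∀ (f : X →L[ℝ] ℝ) (y₀ : Y), ‖G + f.smulRight y₀‖ = 1 + ‖f‖ * ‖y₀‖)
    ↔
    (∀ (y : Y), ‖y‖ = 1 →
      ∀ (f : X →L[ℝ] ℝ), ‖f‖ = 1 →
        ∀ α > (0 : ℝ), ∀ ε > (0 : ℝ),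
          ∃ x : X, ‖x‖ ≤ 1 ∧ f x > 1 - α ∧ ‖y + G x‖ > 2 - ε) := by
  have hGx : ∀ x : X, ‖x‖ ≤ 1 → ‖G x‖ ≤ 1 := fun x hx => by
    have := G.le_opNorm x
    rw [hG] at this
    linarith
  constructor
  · intro H y hy f hf α hα ε hε
    obtain ⟨δ, hδ, hδα, hδε⟩ : ∃ δ > 0, δ ≤ α ∧ 2 * δ ≤ ε :=
      ⟨min α (ε / 2), by positivity, min_le_left _ _, by linarith [min_le_right α (ε / 2)]⟩
    have hn := H f y
    rw [hf, hy] at hn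
    -- Passing to `-x` if necessary makes `f x` nonnegative.
    obtain ⟨x, hx, hfx0, hx2⟩ : ∃ x : X, ‖x‖ ≤ 1 ∧ 0 ≤ f x ∧ 2 - δ < ‖G x + f x • y‖ := by
      obtain ⟨x, hx, hx2⟩ := (G + f.smulRight y).exists_lt_apply_of_lt_opNorm
        (r := 2 - δ) (by linarith)
      rcases le_total 0 (f x) with h | h
      · exact ⟨x, hx.le, h, by simpa using hx2⟩
      · refine ⟨-x, by simpa using hx.le, by simpa using h, ?_⟩
        have e : G (-x) + f (-x) • y = -((G + f.smulRight y) x) := by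
          simp only [map_neg, ContinuousLinearMap.add_apply,
            ContinuousLinearMap.smulRight_apply]
          module
        rwa [e, norm_neg]
    have hfx1 : f x ≤ 1 := by
      have := f.le_opNorm x
      rw [hf, Real.norm_eq_abs] at this
      linarith [le_abs_self (f x)]
    have n1 := norm_add_le (G x) (f x • y)
    rw [norm_smul, hy, Real.norm_of_nonneg hfx0] at n1
    have hfx : 1 - δ < f x := by linarith [hGx x hx]
    have e : G x + f x • y = (y + G x) - (1 - f x) • y := by module
    have n2 := norm_sub_le (y + G x) ((1 - f x) • y)
    rw [← e, norm_smul, hy, Real.norm_of_nonneg (by linarith)] at n2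
    exact ⟨x, hx, by linarith, by linarith⟩
  · intro H f y₀
    rcases eq_or_ne f 0 with rfl | hf
    · have : (0 : X →L[ℝ] ℝ).smulRight y₀ = 0 := by ext; simp
      simp [this, hG]
    rcases eq_or_ne y₀ 0 with rfl | hy
    · have : f.smulRight (0 : Y) = 0 := by ext; simp
      simp [this, hG]
    have hf' : 0 < ‖f‖ := norm_pos_iff.2 hf
    have hy' : 0 < ‖y₀‖ := norm_pos_iff.2 hy
    apply le_antisymm
    · have := norm_add_le G (f.smulRight y₀)
      rwa [hG, ContinuousLinearMap.norm_smulRight_apply] at this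
    set a := ‖f‖ * ‖y₀‖ with ha_def
    have ha : 0 < a := mul_pos hf' hy'
    have hu : ‖‖y₀‖⁻¹ • y₀‖ = 1 := by
      rw [norm_smul, norm_inv, norm_norm, inv_mul_cancel₀ hy'.ne']
    have hg : ‖‖f‖⁻¹ • f‖ = 1 := by
      rw [norm_smul, norm_inv, norm_norm, inv_mul_cancel₀ hf'.ne']
    have key : ∀ δ > 0, 1 + a - (1 + 2 * a) * δ ≤ ‖G + f.smulRight y₀‖ := by
      intro δ hδ
      obtain ⟨x, hx, hgx, hx2⟩ := H _ hu _ hg δ hδ δ hδ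
      have hgx1 : (‖f‖⁻¹ • f) x ≤ 1 := by
        have := (‖f‖⁻¹ • f).le_opNorm x
        rw [hg, Real.norm_eq_abs] at this
        linarith [le_abs_self ((‖f‖⁻¹ • f) x)]
      have n1 := le_norm_smul_add hu.le (hGx x hx) ha.le hδ.le hx2.le
      generalize ht : (‖f‖⁻¹ • f) x = t at hgx hgx1
      have hft : f x = ‖f‖ * t := by
        rw [← ht, ContinuousLinearMap.smul_apply, smul_eq_mul, mul_inv_cancel_left₀ hf'.ne']
      have e1 : a • ‖y₀‖⁻¹ • y₀ = ‖f‖ • y₀ := by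
        rw [smul_smul, ha_def, mul_inv_cancel_right₀ hy'.ne']
      have e : a • ‖y₀‖⁻¹ • y₀ + G x
          = (G + f.smulRight y₀) x + (‖f‖ * (1 - t)) • y₀ := by
        rw [e1, ContinuousLinearMap.add_apply, ContinuousLinearMap.smulRight_apply, hft]
        module
      have n2 := norm_add_le ((G + f.smulRight y₀) x) ((‖f‖ * (1 - t)) • y₀)
      rw [← e, norm_smul, Real.norm_of_nonneg (mul_nonneg hf'.le (by linarith))] at n2
      have n3 := (G + f.smulRight y₀).unit_le_opNorm x hx
      have n4 : ‖f‖ * (1 - t) * ‖y₀‖ ≤ a * δ := by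
        have : ‖f‖ * (1 - t) * ‖y₀‖ = a * (1 - t) := by rw [ha_def]; ring
        rw [this]
        exact mul_le_mul_of_nonneg_left (by linarith) ha.le
      linarith
    refine le_of_forall_pos_le_add fun ε hε => ?_
    have h := key (ε / (1 + 2 * a)) (by positivity)
    rw [mul_div_cancel₀ _ (by positivity)] at h
    linarith
end

section
/- (Bosenko's Lemma) Let X and Y be real Banach spaces and let G : X → Y be a Daugavet center with ‖G‖ = 1. Then for every x ∈ B_X, every y ∈ S_Y and every ε > 0, the set {z ∈ B_X : ‖y + G(z)‖ > 2 − ε} is weakly dense near x; that is, for every finite family f₁, …, f_n of continuous linear functionals on X and every δ > 0, there exists z ∈ B_X such that ‖y + G(z)‖ > 2 − ε and |f_i(z) − f_i(x)| < δ for every i ∈ {1, …, n}. -/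
/-!
Bundle the functionals into one operator `F : X → E` into a Euclidean space, and let `D ⊆ E` be
the set of points that can be approximated by `F z` with `z` in the unit ball and `G z` almost
aligned with any prescribed vector, i.e. `‖y + s • G z‖ > ‖y‖ + s - ε` (`BosenkoGood`).
Aligning with `y` and then with `y + s a • G z₁` shows that `D` is convex; it is also closed.

The Daugavet equation for `f ⊗ y` produces such an aligned `z` in every slice of the ball
(`exists_mem_slice`). If `K` is the closure of `F (B_X)` and `e` is a point of `K` at maximal
distance from some centre `c`, then the slices of `K` at `e` in the direction `e - c` have
diameters tending to zero, so `e ∈ D` (`good_of_farthest`). A closed convex set containing all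
farthest points of the compact set `K` contains `K` (`subset_of_farthest`): otherwise separate a
point from it by a ball of large radius. Hence `F x ∈ K ⊆ D`.
-/

/-- A closed convex set containing every farthest point of a compact set contains that set. -/
lemma subset_of_farthest {E : Type*} [NormedAddCommGroup E] [InnerProductSpace ℝ E]
    [FiniteDimensional ℝ E] {K D : Set E} (hK : IsCompact K) (hD : IsClosed D)
    (hDc : Convex ℝ D)
    (h : ∀ c e, e ∈ K → (∀ z ∈ K, ‖z - c‖ ≤ ‖e - c‖) → e ∈ D) : K ⊆ D := by
  intro q hq
  have far : ∀ c, ∃ e ∈ K, ∀ z ∈ K, ‖z - c‖ ≤ ‖e - c‖ := fun c => by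
    obtain ⟨e, he, hm⟩ := hK.exists_isMaxOn ⟨q, hq⟩
      (f := fun z => ‖z - c‖) (by fun_prop)
    exact ⟨e, he, fun z hz => hm hz⟩
  have hDne : D.Nonempty := by
    obtain ⟨e, he, hm⟩ := far 0
    exact ⟨e, h 0 e he hm⟩
  by_contra hqD
  obtain ⟨p, hp, hmin⟩ := exists_norm_eq_iInf_of_complete_convex hDne hD.isComplete hDc q
  have hin := (norm_eq_iInf_iff_real_inner_le_zero hDc hp).1 hmin
  have hv : 0 < ‖q - p‖ := by
    rw [norm_pos_iff, sub_ne_zero]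
    rintro rfl
    exact hqD hp
  obtain ⟨R, hR⟩ := hK.isBounded.exists_norm_le
  -- A centre so far away on the ray from `q` through `p` that the ball around it passing
  -- through `q` contains `D ∩ K` in its interior.
  obtain ⟨t, ht0, ht⟩ : ∃ t : ℝ, 0 ≤ t ∧ (R + ‖p‖) ^ 2 < (1 + 2 * t) * ‖q - p‖ ^ 2 := by
    refine ⟨(R + ‖p‖) ^ 2 / ‖q - p‖ ^ 2, by positivity, ?_⟩
    have : (R + ‖p‖) ^ 2 / ‖q - p‖ ^ 2 * ‖q - p‖ ^ 2 = (R + ‖p‖) ^ 2 := by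
      field_simp
    nlinarith [sq_nonneg (R + ‖p‖), pow_pos hv 2]
  obtain ⟨e, he, hm⟩ := far (p - t • (q - p))
  have heD := h _ e he hm
  have h1 := hm q hq
  have h2 : ‖q - (p - t • (q - p))‖ ^ 2 = (1 + t) ^ 2 * ‖q - p‖ ^ 2 := by
    rw [show q - (p - t • (q - p)) = (1 + t) • (q - p) by module, norm_smul, mul_pow,
      Real.norm_eq_abs, sq_abs]
  have h3 : ‖e - (p - t • (q - p))‖ ^ 2
      = ‖e - p‖ ^ 2 + 2 * t * inner ℝ (q - p) (e - p) + t ^ 2 * ‖q - p‖ ^ 2 := by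
    rw [show e - (p - t • (q - p)) = (e - p) + t • (q - p) by module, norm_add_sq_real,
      norm_smul, mul_pow, Real.norm_eq_abs, sq_abs, inner_smul_right, real_inner_comm]
    ring
  have h4 := hin e heD
  have h5 : ‖e - p‖ ≤ R + ‖p‖ := (norm_sub_le _ _).trans (by linarith [hR e he])
  have h6 : ‖e - p‖ ^ 2 ≤ (R + ‖p‖) ^ 2 := pow_le_pow_left₀ (norm_nonneg _) h5 2
  have h7 := pow_le_pow_left₀ (norm_nonneg _) h1 2
  rw [h2, h3] at h7
  nlinarith [mul_nonneg ht0 (neg_nonneg.2 h4)]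

section

variable {X Y : Type*} [NormedAddCommGroup X] [NormedSpace ℝ X]
  [NormedAddCommGroup Y] [NormedSpace ℝ Y]

/-- Slices of the ball given by a norm-one functional meet the set of points aligned with a given
unit vector. -/
lemma exists_mem_slice_unit (G : X →L[ℝ] Y) (hG : ‖G‖ = 1)
    (hDC : ∀ (f : X →L[ℝ] ℝ) (y₀ : Y), ‖G + f.smulRight y₀‖ = 1 + ‖f‖ * ‖y₀‖)
    (g : X →L[ℝ] ℝ) (hg : ‖g‖ = 1) (y : Y) (hy : ‖y‖ = 1) {η : ℝ} (hη : 0 < η) :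
    ∃ z : X, ‖z‖ ≤ 1 ∧ 1 - η < g z ∧ 2 - η < ‖y + G z‖ := by
  have hn : 2 - η / 2 < ‖G + g.smulRight y‖ := by
    rw [hDC, hg, hy]; linarith
  obtain ⟨u, hu, hgu, hun⟩ :
      ∃ u : X, ‖u‖ ≤ 1 ∧ 0 ≤ g u ∧ 2 - η / 2 < ‖G u + g u • y‖ := by
    obtain ⟨u, hu, hun⟩ : ∃ u : X, ‖u‖ ≤ 1 ∧ 2 - η / 2 < ‖G u + g u • y‖ := by
      by_contra! hcon
      by_cases hneg : 0 ≤ 2 - η / 2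
      · refine hn.not_ge (ContinuousLinearMap.opNorm_le_of_unit_norm hneg fun x hx => ?_)
        simpa using hcon x hx.le
      · have := hcon 0 (by simp)
        simp at this
        linarith
    rcases le_total 0 (g u) with h | h
    · exact ⟨u, hu, h, hun⟩
    · refine ⟨-u, by simpa using hu, by simpa using h, ?_⟩
      rw [map_neg, map_neg, neg_smul, ← neg_add, norm_neg]
      exact hun
  have hGu : ‖G u‖ ≤ 1 := (G.le_opNorm u).trans (by rw [hG]; linarith)
  have hg1 : g u ≤ 1 := (le_abs_self _).trans ((g.le_opNorm u).trans (by rw [hg]; linarith))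
  have hguy : ‖g u • y‖ = g u := by rw [norm_smul, hy, Real.norm_of_nonneg hgu, mul_one]
  have h1 := norm_add_le (G u) (g u • y)
  have h2 : ‖G u + g u • y‖ ≤ ‖y + G u‖ + (1 - g u) := by
    rw [show G u + g u • y = (y + G u) - (1 - g u) • y by module]
    refine (norm_sub_le _ _).trans ?_
    rw [norm_smul, hy, Real.norm_of_nonneg (by linarith), mul_one]
  exact ⟨u, hu, by linarith, by linarith⟩

/-- Every slice of the ball contains points `z` with `G z` almost aligned with `y`. -/
lemma exists_mem_slice_s11 (G : X →L[ℝ] Y) (hG : ‖G‖ = 1)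
    (hDC : ∀ (f : X →L[ℝ] ℝ) (y₀ : Y), ‖G + f.smulRight y₀‖ = 1 + ‖f‖ * ‖y₀‖)
    (f : X →L[ℝ] ℝ) (y : Y) {s : ℝ} (hs : 0 ≤ s) {ε α : ℝ} (hε : 0 < ε) (hα : 0 < α) :
    ∃ z : X, ‖z‖ ≤ 1 ∧ ‖f‖ - α < f z ∧ ‖y‖ + s - ε < ‖y + s • G z‖ := by
  obtain ⟨x₀, hx₀⟩ : ∃ x, G x ≠ 0 := by
    by_contra! hcon
    have : G = 0 := by ext x; simp [hcon x]
    simp [this] at hG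
  -- When `f = 0` or `y = 0`, any norm-one functional or vector serves as its direction.
  obtain ⟨g, hg, hfg⟩ : ∃ g : X →L[ℝ] ℝ, ‖g‖ = 1 ∧ f = ‖f‖ • g := by
    by_cases hf : f = 0
    · obtain ⟨g, hg, -⟩ := exists_dual_vector ℝ x₀ (fun h => hx₀ (by simp [norm_eq_zero.1 h]))
      exact ⟨g, hg, by simp [hf]⟩
    · have hf' : ‖f‖ ≠ 0 := by simpa using hf
      exact ⟨‖f‖⁻¹ • f, by simp [norm_smul, hf'], by simp [smul_smul, hf']⟩
  obtain ⟨y₀, hy₀, hyy⟩ : ∃ y₀ : Y, ‖y₀‖ = 1 ∧ y = ‖y‖ • y₀ := by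
    by_cases hy : y = 0
    · exact ⟨‖G x₀‖⁻¹ • G x₀, by simp [norm_smul, hx₀], by simp [hy]⟩
    · have hy' : ‖y‖ ≠ 0 := by simpa using hy
      exact ⟨‖y‖⁻¹ • y, by simp [norm_smul, hy'], by simp [smul_smul, hy']⟩
  set r := ‖y‖
  have hr : 0 ≤ r := norm_nonneg y
  set M := max r s
  have hM : 0 ≤ M := hr.trans (le_max_left _ _)
  have hMr : r ≤ M := le_max_left _ _
  have hMs : s ≤ M := le_max_right _ _
  obtain ⟨z, hz, hgz, hyz⟩ := exists_mem_slice_unit G hG hDC g hg y₀ hy₀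
    (η := min (α / (‖f‖ + 1)) (ε / (M + 1))) (by positivity)
  have e1 : ‖f‖ * (α / (‖f‖ + 1)) < α := by
    rw [mul_div_assoc', div_lt_iff₀ (by positivity)]; nlinarith
  have e2 : M * (ε / (M + 1)) < ε := by
    rw [mul_div_assoc', div_lt_iff₀ (by positivity)]; nlinarith
  have hgz' : 1 - α / (‖f‖ + 1) ≤ g z := by
    linarith [min_le_left (α / (‖f‖ + 1)) (ε / (M + 1))]
  have hyz' : 2 - ε / (M + 1) ≤ ‖y₀ + G z‖ := by
    linarith [min_le_right (α / (‖f‖ + 1)) (ε / (M + 1))]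
  have hGz : ‖G z‖ ≤ 1 := (G.le_opNorm z).trans (by rw [hG]; linarith)
  refine ⟨z, hz, ?_, ?_⟩
  · have : f z = ‖f‖ * g z := by
      conv_lhs => rw [hfg]
      simp
    rw [this]
    nlinarith [mul_le_mul_of_nonneg_left hgz' (norm_nonneg f)]
  · -- Raise both coefficients `r` and `s` to their maximum `M`.
    have h1 : M * ‖y₀ + G z‖ ≤ ‖y + s • G z‖ + (M - r) + (M - s) := by
      rw [← Real.norm_of_nonneg hM, ← norm_smul, Real.norm_of_nonneg hM,
        show M • (y₀ + G z) = (r • y₀ + s • G z) + (M - r) • y₀ + (M - s) • G z by module,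
        ← hyy]
      refine (norm_add₃_le).trans ?_
      rw [norm_smul (M - r), norm_smul (M - s), hy₀, Real.norm_of_nonneg (sub_nonneg.2 hMr),
        Real.norm_of_nonneg (sub_nonneg.2 hMs)]
      nlinarith
    nlinarith [mul_le_mul_of_nonneg_left hyz' hM]

variable {E : Type*} [NormedAddCommGroup E] [InnerProductSpace ℝ E]

/-- The points of `E` that are limits of values `F z` with `z` in the unit ball and `G z` almost
aligned with any prescribed `y`. The weight `s` makes the condition stable under convex
combinations. -/
def BosenkoGood (G : X →L[ℝ] Y) (F : X →L[ℝ] E) : Set E :=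
  {p | ∀ (y : Y) (s : ℝ), 0 ≤ s → ∀ ε > (0 : ℝ), ∀ δ > (0 : ℝ),
    ∃ z : X, ‖z‖ ≤ 1 ∧ ‖y‖ + s - ε < ‖y + s • G z‖ ∧ ‖F z - p‖ < δ}

lemma isClosed_good (G : X →L[ℝ] Y) (F : X →L[ℝ] E) : IsClosed (BosenkoGood G F) := by
  refine isClosed_of_closure_subset fun p hp y s hs ε hε δ hδ => ?_
  obtain ⟨q, hq, hpq⟩ := Metric.mem_closure_iff.1 hp (δ / 2) (by positivity)
  obtain ⟨z, hz, h1, h2⟩ := hq y s hs ε hε (δ / 2) (by positivity)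
  refine ⟨z, hz, h1, ?_⟩
  rw [dist_comm, dist_eq_norm] at hpq
  have := norm_sub_le_norm_sub_add_norm_sub (F z) q p
  linarith

lemma convex_good (G : X →L[ℝ] Y) (F : X →L[ℝ] E) : Convex ℝ (BosenkoGood G F) := by
  intro p hp q hq a b ha hb hab y s hs ε hε δ hδ
  obtain ⟨z₁, hz₁, h₁, d₁⟩ := hp y (s * a) (by positivity) (ε / 2) (by positivity) δ hδ
  obtain ⟨z₂, hz₂, h₂, d₂⟩ := hq (y + (s * a) • G z₁) (s * b) (by positivity) (ε / 2)
    (by positivity) δ hδ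
  have comb : ∀ u v : E, ‖a • u + b • v‖ ≤ a * ‖u‖ + b * ‖v‖ := fun u v => by
    refine (norm_add_le _ _).trans ?_
    rw [norm_smul, norm_smul, Real.norm_of_nonneg ha, Real.norm_of_nonneg hb]
  refine ⟨a • z₁ + b • z₂, ?_, ?_, ?_⟩
  · have h := (norm_add_le (a • z₁) (b • z₂))
    rw [norm_smul, norm_smul, Real.norm_of_nonneg ha, Real.norm_of_nonneg hb] at h
    nlinarith
  · have : y + s • G (a • z₁ + b • z₂) = y + (s * a) • G z₁ + (s * b) • G z₂ := by
      simp only [map_add, map_smul]; module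
    rw [this]
    have : s * a + s * b = s := by rw [← mul_add, hab, mul_one]
    linarith
  · have : F (a • z₁ + b • z₂) - (a • p + b • q) = a • (F z₁ - p) + b • (F z₂ - q) := by
      simp only [map_add, map_smul]; module
    rw [this]
    refine (comb _ _).trans_lt ?_
    rcases ha.eq_or_lt with rfl | ha'
    · have : b = 1 := by linarith
      subst this; linarith
    · nlinarith [mul_lt_mul_of_pos_left d₁ ha', mul_le_mul_of_nonneg_left d₂.le hb]

/-- A farthest point `e` from `c` is strongly exposed by `e - c`, so the corresponding slices of
the ball of `X` are mapped into arbitrarily small neighbourhoods of `e`. -/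
lemma good_of_farthest (G : X →L[ℝ] Y) (hG : ‖G‖ = 1)
    (hDC : ∀ (f : X →L[ℝ] ℝ) (y₀ : Y), ‖G + f.smulRight y₀‖ = 1 + ‖f‖ * ‖y₀‖)
    (F : X →L[ℝ] E) (c e : E) (he : e ∈ closure (F '' Metric.closedBall 0 1))
    (hm : ∀ z ∈ closure (F '' Metric.closedBall 0 1), ‖z - c‖ ≤ ‖e - c‖) :
    e ∈ BosenkoGood G F := by
  intro y s hs ε hε δ hδ
  set f : X →L[ℝ] ℝ := (innerSL ℝ (e - c)).comp F with hf
  have hfv : ∀ z, f z = inner ℝ (e - c) (F z) := fun z => rfl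
  have hle : inner ℝ (e - c) e ≤ ‖f‖ := by
    have hcl : IsClosed {w : E | inner ℝ (e - c) w ≤ ‖f‖} :=
      isClosed_le (by fun_prop) (by fun_prop)
    refine closure_minimal ?_ hcl he
    rintro _ ⟨b, hb, rfl⟩
    rw [mem_closedBall_zero_iff] at hb
    have := (le_abs_self _).trans (f.le_opNorm b)
    rw [hfv] at this
    exact this.trans (mul_le_of_le_one_right (norm_nonneg _) hb)
  obtain ⟨z, hz, hfz, hyz⟩ := exists_mem_slice_s11 G hG hDC f y hs hε
    (α := δ ^ 2 / 2) (by positivity)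
  refine ⟨z, hz, hyz, ?_⟩
  have h1 := hm (F z) (subset_closure ⟨z, by simpa using hz, rfl⟩)
  have h2 := pow_le_pow_left₀ (norm_nonneg _) h1 2
  rw [show F z - c = (e - c) + (F z - e) by abel, norm_add_sq_real, inner_sub_right] at h2
  rw [hfv] at hfz
  exact lt_of_pow_lt_pow_left₀ 2 hδ.le (by linarith)

end

/-- Bosenko's Lemma: if `G : X → Y` is a norm-one Daugavet center, then for
every `x ∈ B_X`, `y ∈ S_Y` and `ε > 0`, the set `{z ∈ B_X : ‖y + G z‖ > 2 - ε}` is weakly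
dense near `x`. -/
theorem bosenko_lemma
    {X Y : Type*} [NormedAddCommGroup X] [NormedSpace ℝ X] [CompleteSpace X]
    [NormedAddCommGroup Y] [NormedSpace ℝ Y] [CompleteSpace Y]
    (G : X →L[ℝ] Y) (hG : ‖G‖ = 1)
    (hDC : ∀ (f : X →L[ℝ] ℝ) (y₀ : Y), ‖G + f.smulRight y₀‖ = 1 + ‖f‖ * ‖y₀‖) :
    ∀ (x : X), ‖x‖ ≤ 1 → ∀ (y : Y), ‖y‖ = 1 → ∀ ε > (0 : ℝ),
      ∀ (n : ℕ) (f : Fin n → (X →L[ℝ] ℝ)), ∀ δ > (0 : ℝ),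
        ∃ z : X, ‖z‖ ≤ 1 ∧ ‖y + G z‖ > 2 - ε ∧
          ∀ i : Fin n, |f i z - f i x| < δ := by
  intro x hx y hy ε hε n f δ hδ
  let F : X →L[ℝ] EuclideanSpace ℝ (Fin n) :=
    ((EuclideanSpace.equiv (Fin n) ℝ).symm : (Fin n → ℝ) →L[ℝ] EuclideanSpace ℝ (Fin n)).comp
      (ContinuousLinearMap.pi f)
  have hF : ∀ z i, F z i = f i z := fun z i => rfl
  have hK : IsCompact (closure (F '' Metric.closedBall 0 1)) :=
    (F.lipschitz.isBounded_image Metric.isBounded_closedBall).isCompact_closure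
  have hmem : F x ∈ BosenkoGood G F :=
    subset_of_farthest hK (isClosed_good G F) (convex_good G F)
      (good_of_farthest G hG hDC F) (subset_closure ⟨x, by simpa using hx, rfl⟩)
  obtain ⟨z, hz, h1, h2⟩ := hmem y 1 zero_le_one ε hε δ hδ
  refine ⟨z, hz, ?_, fun i => ?_⟩
  · rw [hy, one_smul] at h1
    linarith
  · have := PiLp.norm_apply_le (F z - F x) i
    rw [PiLp.sub_apply, hF, hF, Real.norm_eq_abs] at this
    exact this.trans_lt h2
end

section
/- Let X and Y be real Banach spaces and let G : X → Y be a Daugavet center with ‖G‖ = 1. Then for every x ∈ B_X, every y ∈ S_Y and every ε > 0, the set {z ∈ B_X : ‖y + G(z)‖ > 2 − ε} is dense in B_X for the weak polynomial topology; that is, for every finite family p₁, …, p_k of continuous scalar polynomials on X and every δ > 0, there exists z ∈ B_X such that ‖y + G(z)‖ > 2 − ε and |p_i(z) − p_i(x)| < δ for every i ∈ {1, …, k}. -/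
section
variable {X Y : Type*} [NormedAddCommGroup X] [NormedSpace ℝ X]
    [NormedAddCommGroup Y] [NormedSpace ℝ Y]

/-! ### Slices of the unit ball -/

/-- The norm identity defining a Daugavet center of norm one. The condition `‖G‖ = 1` is kept as a
separate hypothesis. -/
def IsDaugavetCenter (G : X →L[ℝ] Y) : Prop :=
  ∀ (f : X →L[ℝ] ℝ) (y₀ : Y), ‖G + f.smulRight y₀‖ = 1 + ‖f‖ * ‖y₀‖

lemma norm_smul_add_smulRight {G : X →L[ℝ] Y} (hDC : IsDaugavetCenter G)
    (f : X →L[ℝ] ℝ) (v : Y) {l : ℝ} (hl : 0 ≤ l) :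
    ‖l • G + f.smulRight v‖ = l + ‖f‖ * ‖v‖ := by
  rcases hl.eq_or_lt with rfl | hl
  · simp
  · have h : l • G + f.smulRight v = l • (G + f.smulRight (l⁻¹ • v)) := by
      ext z
      simp [smul_smul]
      congr 1
      field_simp
    rw [h, norm_smul, hDC, norm_smul, norm_inv, Real.norm_of_nonneg hl.le]
    field_simp

/-- The slice lemma for a normalized functional: an almost norming point of `l • G + f ⊗ v`, with the
sign for which `f z ≥ 0`, must have `f z` close to `1`. -/
lemma exists_mem_slice_of_norm_one_s12 {G : X →L[ℝ] Y} (hG : ‖G‖ = 1) (hDC : IsDaugavetCenter G)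
    {f : X →L[ℝ] ℝ} (hf : ‖f‖ = 1) {v : Y} (hv : v ≠ 0) {l η : ℝ} (hl : 0 ≤ l) (hη : 0 < η) :
    ∃ z : X, ‖z‖ ≤ 1 ∧ 1 - η ≤ f z ∧ ‖v‖ + l - η ≤ ‖v + l • G z‖ := by
  have hv' : 0 < ‖v‖ := norm_pos_iff.2 hv
  obtain ⟨κ, hκ, hκ1, hκ2⟩ : ∃ κ > 0, κ ≤ η / 2 ∧ κ ≤ η * ‖v‖ :=
    ⟨min (η / 2) (η * ‖v‖), by positivity, min_le_left _ _, min_le_right _ _⟩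
  have hlt : l + ‖v‖ - κ < ‖l • G + f.smulRight v‖ := by
    rw [norm_smul_add_smulRight hDC f v hl, hf]; linarith
  obtain ⟨z, hz, hzT, hfz⟩ : ∃ z : X, ‖z‖ ≤ 1 ∧
      l + ‖v‖ - κ < ‖(l • G + f.smulRight v) z‖ ∧ 0 ≤ f z := by
    obtain ⟨z, hz, hzT⟩ := ContinuousLinearMap.exists_lt_apply_of_lt_opNorm _ hlt
    rcases le_total 0 (f z) with h | h
    · exact ⟨z, hz.le, hzT, h⟩
    · exact ⟨-z, by simpa using hz.le, by rwa [map_neg, norm_neg], by simpa using h⟩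
  have hGz : ‖l • G z‖ ≤ l := by
    rw [norm_smul, Real.norm_of_nonneg hl]
    exact mul_le_of_le_one_right hl ((G.le_opNorm z).trans (by rw [hG, one_mul]; exact hz))
  have hf1 : f z ≤ 1 :=
    (le_abs_self _).trans ((f.le_opNorm z).trans (by rw [hf, one_mul]; exact hz))
  have hfv : ‖v‖ - κ < f z * ‖v‖ := by
    have h := norm_add_le (l • G z) (f z • v)
    rw [norm_smul (f z), Real.norm_of_nonneg hfz] at h
    simp only [add_apply, FunLike.coe_smul, Pi.smul_apply,
      ContinuousLinearMap.smulRight_apply] at hzT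
    linarith
  refine ⟨z, hz, ?_, ?_⟩
  · by_contra! h
    nlinarith
  · have h := norm_sub_le (v + l • G z) ((1 - f z) • v)
    rw [norm_smul, Real.norm_of_nonneg (sub_nonneg.2 hf1)] at h
    have e : (v + l • G z) - (1 - f z) • v = (l • G + f.smulRight v) z := by
      simp [sub_smul]
    rw [e] at h
    linarith

/-- Every slice of the unit ball, including the degenerate one given by `f = 0`, contains a point
whose image under `l • G` is almost in the direction of `v`. -/
lemma exists_mem_slice_s12 {G : X →L[ℝ] Y} (hG : ‖G‖ = 1) (hDC : IsDaugavetCenter G)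
    (f : X →L[ℝ] ℝ) (v : Y) {l η : ℝ} (hl : 0 ≤ l) (hη : 0 < η) :
    ∃ z : X, ‖z‖ ≤ 1 ∧ ‖f‖ - η ≤ f z ∧ ‖v‖ + l - η ≤ ‖v + l • G z‖ := by
  obtain ⟨x₀, hx₀⟩ : ∃ x, G x ≠ 0 := by
    by_contra! h
    have : G = 0 := by ext x; exact h x
    simp [this] at hG
  have hx₀' : x₀ ≠ 0 := fun h => hx₀ (by simp [h])
  obtain ⟨w, hw, hwv⟩ : ∃ w : Y, w ≠ 0 ∧ ‖w - v‖ ≤ η / 4 := by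
    by_cases hv : v = 0
    · refine ⟨(η / 4 * ‖G x₀‖⁻¹) • G x₀, ?_, ?_⟩
      · have : 0 < ‖G x₀‖ := norm_pos_iff.2 hx₀
        exact smul_ne_zero (by positivity) hx₀
      · have : 0 < ‖G x₀‖ := norm_pos_iff.2 hx₀
        rw [hv, sub_zero, norm_smul, Real.norm_of_nonneg (by positivity)]
        field_simp; rfl
    · exact ⟨v, hv, by simp; positivity⟩
  obtain ⟨g, hg, r, hr, hfg⟩ : ∃ g : X →L[ℝ] ℝ, ‖g‖ = 1 ∧ ∃ r : ℝ, 0 ≤ r ∧ f = r • g := by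
    by_cases hf : f = 0
    · obtain ⟨g, hg, -⟩ := exists_dual_vector ℝ x₀ (norm_ne_zero_iff.2 hx₀')
      exact ⟨g, hg, 0, le_rfl, by simp [hf]⟩
    · have : ‖f‖ ≠ 0 := norm_ne_zero_iff.2 hf
      exact ⟨‖f‖⁻¹ • f, by rw [norm_smul, norm_inv, norm_norm, inv_mul_cancel₀ this], ‖f‖,
        norm_nonneg _, by rw [smul_smul, mul_inv_cancel₀ this, one_smul]⟩
  obtain ⟨κ, hκ, hκ1, hκ2⟩ : ∃ κ > 0, κ ≤ η / 4 ∧ r * κ ≤ η := by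
    refine ⟨min (η / 4) (η / (r + 1)), by positivity, min_le_left _ _, ?_⟩
    have h1 : r * min (η / 4) (η / (r + 1)) ≤ (r + 1) * (η / (r + 1)) := by
      gcongr
      · linarith
      · exact min_le_right _ _
    rwa [mul_div_cancel₀ _ (by positivity : r + 1 ≠ 0)] at h1
  obtain ⟨z, hz, hgz, hGz⟩ := exists_mem_slice_of_norm_one_s12 hG hDC hg hw hl hκ
  refine ⟨z, hz, ?_, ?_⟩
  · rw [hfg, norm_smul, hg, Real.norm_of_nonneg hr]
    simp only [FunLike.coe_smul, Pi.smul_apply, smul_eq_mul]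
    nlinarith
  · have h1 : ‖w + l • G z‖ ≤ ‖v + l • G z‖ + ‖w - v‖ := by
      have := norm_add_le (v + l • G z) (w - v)
      rwa [show v + l • G z + (w - v) = w + l • G z by abel] at this
    have h2 : ‖v‖ ≤ ‖w‖ + ‖w - v‖ := by
      have := norm_sub_le w (w - v)
      rwa [sub_sub_cancel] at this
    linarith

/-! ### Weak neighbourhoods -/

/-- The points `w` of the Hilbert space `H` such that, for all `v` and `l ≥ 0`, the vectors `z` of the
unit ball with `‖Φ z - w‖ ≤ δ` make `‖v + l • G z‖` arbitrarily close to `‖v‖ + l`. The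
quantification over all `v` and `l` is what makes this set convex. -/
def reachSet {H : Type*} [NormedAddCommGroup H] [InnerProductSpace ℝ H]
    (G : X →L[ℝ] Y) (Φ : X →L[ℝ] H) (δ : ℝ) : Set H :=
  {w | ∀ (v : Y) (l η : ℝ), 0 ≤ l → 0 < η →
    ∃ z : X, ‖z‖ ≤ 1 ∧ ‖Φ z - w‖ ≤ δ ∧ ‖v‖ + l - η ≤ ‖v + l • G z‖}

/-- For a convex combination `a • w₁ + b • w₂`, the point for `w₂` is chosen after the one for `w₁`,
with `v + (l * a) • G z₁` in the role of `v`. -/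
lemma convex_reachSet {H : Type*} [NormedAddCommGroup H] [InnerProductSpace ℝ H]
    (G : X →L[ℝ] Y) (Φ : X →L[ℝ] H) (δ : ℝ) : Convex ℝ (reachSet G Φ δ) := by
  intro w₁ h₁ w₂ h₂ a b ha hb hab v l η hl hη
  obtain ⟨z₁, hz₁, hw₁, hv₁⟩ := h₁ v (l * a) (η / 2) (by positivity) (by positivity)
  obtain ⟨z₂, hz₂, hw₂, hv₂⟩ :=
    h₂ (v + (l * a) • G z₁) (l * b) (η / 2) (by positivity) (by positivity)
  refine ⟨a • z₁ + b • z₂, ?_, ?_, ?_⟩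
  · simpa using (convex_closedBall (0 : X) 1) (by simpa using hz₁) (by simpa using hz₂) ha hb hab
  · have e : Φ (a • z₁ + b • z₂) - (a • w₁ + b • w₂) = a • (Φ z₁ - w₁) + b • (Φ z₂ - w₂) := by
      simp only [map_add, map_smul, smul_sub]; abel
    rw [e]
    simpa using (convex_closedBall (0 : H) δ) (by simpa using hw₁) (by simpa using hw₂) ha hb hab
  · have e : v + l • G (a • z₁ + b • z₂) = v + (l * a) • G z₁ + (l * b) • G z₂ := by
      simp only [map_add, map_smul, smul_add, smul_smul]; abel
    rw [e]
    have : l * a + l * b = l := by rw [← mul_add, hab, mul_one]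
    linarith

/-- If `u` almost maximizes `‖Φ u - c‖` over the unit ball, then `Φ u` lies in the reach set. -/
lemma exists_mem_reachSet {H : Type*} [NormedAddCommGroup H] [InnerProductSpace ℝ H]
    {G : X →L[ℝ] Y} (hG : ‖G‖ = 1) (hDC : IsDaugavetCenter G)
    (Φ : X →L[ℝ] H) {δ : ℝ} (hδ : 0 < δ) (c : H) :
    ∃ u : X, ‖u‖ ≤ 1 ∧ Φ u ∈ reachSet G Φ δ ∧
      ∀ z : X, ‖z‖ ≤ 1 → ‖Φ z - c‖ ^ 2 ≤ ‖Φ u - c‖ ^ 2 + δ ^ 2 / 4 := by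
  obtain ⟨u, hu, hmax⟩ : ∃ u : X, ‖u‖ ≤ 1 ∧
      ∀ z : X, ‖z‖ ≤ 1 → ‖Φ z - c‖ ^ 2 ≤ ‖Φ u - c‖ ^ 2 + δ ^ 2 / 4 := by
    let S : Set ℝ := (fun z => ‖Φ z - c‖ ^ 2) '' Metric.closedBall (0 : X) 1
    have hbdd : BddAbove S := by
      refine ⟨(‖Φ‖ + ‖c‖) ^ 2, ?_⟩
      rintro _ ⟨z, hz, rfl⟩
      have hz : ‖z‖ ≤ 1 := by simpa using hz
      have h := norm_sub_le (Φ z) c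
      have h2 := Φ.le_of_opNorm_le_of_le le_rfl hz
      dsimp only
      gcongr
      linarith
    have hne : S.Nonempty := ⟨_, 0, by simp, rfl⟩
    obtain ⟨_, ⟨u, hu, rfl⟩, hlt⟩ := exists_lt_of_lt_csSup hne
      (show sSup S - δ ^ 2 / 4 < sSup S by linarith [show 0 < δ ^ 2 / 4 by positivity])
    refine ⟨u, by simpa using hu, fun z hz => ?_⟩
    have := le_csSup hbdd (show ‖Φ z - c‖ ^ 2 ∈ S from ⟨z, by simpa using hz, rfl⟩)
    dsimp only at hlt
    linarith
  refine ⟨u, hu, fun v l η hl hη => ?_, hmax⟩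
  -- Since `‖Φ z - c‖` cannot exceed `‖Φ u - c‖` by much, a large value of this functional at `z`
  -- forces `Φ z` to be close to `Φ u`.
  let f : X →L[ℝ] ℝ := (innerSL ℝ (Φ u - c)).comp Φ
  have hf : ∀ z, f z = inner ℝ (Φ u - c) (Φ z) := fun z => rfl
  obtain ⟨z, hz, hfz, hGz⟩ :=
    exists_mem_slice_s12 hG hDC f v hl (show 0 < min η (δ ^ 2 / 4) by positivity)
  refine ⟨z, hz, ?_, hGz.trans' (by linarith [min_le_left η (δ ^ 2 / 4)])⟩
  have hfu : f u ≤ ‖f‖ := by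
    have := f.le_of_opNorm_le_of_le le_rfl hu
    rw [mul_one] at this
    exact (le_abs_self _).trans this
  have h1 : f u - δ ^ 2 / 4 ≤ f z := by linarith [min_le_right η (δ ^ 2 / 4)]
  have h2 := hmax z hz
  have h3 : ‖Φ z - Φ u‖ ^ 2 = ‖Φ z - c‖ ^ 2 - ‖Φ u - c‖ ^ 2 - 2 * (f z - f u) := by
    have e : Φ z - c = (Φ z - Φ u) + (Φ u - c) := by abel
    rw [e, norm_add_sq_real, hf, hf, ← inner_sub_right, real_inner_comm]
    ring
  refine le_of_sq_le_sq ?_ hδ.le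
  nlinarith

lemma map_mem_closure_reachSet {H : Type*} [NormedAddCommGroup H] [InnerProductSpace ℝ H]
    [CompleteSpace H]
    {G : X →L[ℝ] Y} (hG : ‖G‖ = 1) (hDC : IsDaugavetCenter G)
    (Φ : X →L[ℝ] H) {δ : ℝ} (hδ : 0 < δ) {x : X} (hx : ‖x‖ ≤ 1) :
    Φ x ∈ closure (reachSet G Φ δ) := by
  by_contra hmem
  obtain ⟨f, s, hs, hsx⟩ := geometric_hahn_banach_closed_point
    (convex_reachSet G Φ δ).closure isClosed_closure hmem
  -- Seen from the center `-R • g`, the far points of the image of the ball are those where `f` is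
  -- large, provided that `R` is large.
  let g : H := (InnerProductSpace.toDual ℝ H).symm f
  have hg : ∀ h, inner ℝ g h = f h := fun h => InnerProductSpace.toDual_symm_apply
  have hgap : 0 < f (Φ x) - s := by linarith
  obtain ⟨R, hR⟩ := exists_nat_gt ((‖Φ‖ ^ 2 + δ ^ 2 / 4) / (f (Φ x) - s))
  rw [div_lt_iff₀ hgap] at hR
  obtain ⟨u, hu, hmem, hmax⟩ := exists_mem_reachSet hG hDC Φ hδ (-((R : ℝ) • g))
  have h1 := hmax x hx
  have h2 := hs _ (subset_closure hmem)
  have hexp : ∀ h : H, ‖h - -((R : ℝ) • g)‖ ^ 2 =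
      ‖h‖ ^ 2 + 2 * R * f h + ‖(R : ℝ) • g‖ ^ 2 := by
    intro h
    rw [sub_neg_eq_add, norm_add_sq_real, real_inner_smul_right, real_inner_comm, hg]
    ring
  rw [hexp, hexp] at h1
  have h3 : ‖Φ u‖ ^ 2 ≤ ‖Φ‖ ^ 2 := by
    have := Φ.le_of_opNorm_le_of_le le_rfl hu
    rw [mul_one] at this
    gcongr
  have hR0 : (0 : ℝ) ≤ R := Nat.cast_nonneg R
  nlinarith [sq_nonneg ‖Φ x‖, mul_le_mul_of_nonneg_left h2.le hR0]

/-- The Shvidkoy lemma for Daugavet centers, on weak neighbourhoods of `x`. -/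
lemma exists_weak_near {G : X →L[ℝ] Y} (hG : ‖G‖ = 1) (hDC : IsDaugavetCenter G)
    {ι : Type*} [Fintype ι] (φ : ι → X →L[ℝ] ℝ) {x : X} (hx : ‖x‖ ≤ 1) (v : Y)
    {η : ℝ} (hη : 0 < η) :
    ∃ z : X, ‖z‖ ≤ 1 ∧ ‖v‖ + 1 - η ≤ ‖v + G z‖ ∧ ∀ i, |φ i z - φ i x| ≤ η := by
  let Φ : X →L[ℝ] EuclideanSpace ℝ ι :=
    ((PiLp.continuousLinearEquiv 2 ℝ (fun _ : ι => ℝ)).symm :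
      (ι → ℝ) →L[ℝ] EuclideanSpace ℝ ι).comp (ContinuousLinearMap.pi φ)
  have hΦ : ∀ z i, Φ z i = φ i z := fun z i => rfl
  obtain ⟨w, hw, hwx⟩ := Metric.mem_closure_iff.1
    (map_mem_closure_reachSet hG hDC Φ (half_pos hη) hx) (η / 2) (half_pos hη)
  obtain ⟨z, hz, hzw, hGz⟩ := hw v 1 η zero_le_one hη
  rw [one_smul] at hGz
  refine ⟨z, hz, hGz, fun i => ?_⟩
  rw [← hΦ, ← hΦ, ← PiLp.sub_apply, ← Real.norm_eq_abs]
  refine (PiLp.norm_apply_le _ i).trans ?_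
  have h := norm_sub_le_norm_sub_add_norm_sub (Φ z) w (Φ x)
  rw [dist_eq_norm, norm_sub_rev] at hwx
  linarith

/-! ### Averages and polynomials -/

/-- A function of `m` vectors which is continuous and affine in each of them separately. -/
def IsSepAffine {m : ℕ} (Q : (Fin m → X) → ℝ) : Prop :=
  ∀ (z : Fin m → X) (j : Fin m), ∃ (φ : X →L[ℝ] ℝ) (c : ℝ),
    ∀ u, Q (Function.update z j u) = c + φ u

lemma isSepAffine_const {m : ℕ} (c : ℝ) : IsSepAffine (fun _ : Fin m → X => c) :=
  fun _ _ => ⟨0, c, by simp⟩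

lemma IsSepAffine.add {m : ℕ} {P Q : (Fin m → X) → ℝ} (hP : IsSepAffine P)
    (hQ : IsSepAffine Q) : IsSepAffine (fun z => P z + Q z) := by
  intro z j
  obtain ⟨φ, c, h⟩ := hP z j
  obtain ⟨ψ, d, h'⟩ := hQ z j
  exact ⟨φ + ψ, c + d, fun u => by simp only [h, h', add_apply]; ring⟩

lemma IsSepAffine.const_mul {m : ℕ} {P : (Fin m → X) → ℝ} (hP : IsSepAffine P) (a : ℝ) :
    IsSepAffine (fun z => a * P z) := by
  intro z j
  obtain ⟨φ, c, h⟩ := hP z j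
  exact ⟨a • φ, a * c, fun u => by
    simp only [h, FunLike.coe_smul, Pi.smul_apply, smul_eq_mul]; ring⟩

lemma isSepAffine_sum {m : ℕ} {ι : Type*} (s : Finset ι) {P : ι → (Fin m → X) → ℝ}
    (hP : ∀ i ∈ s, IsSepAffine (P i)) : IsSepAffine (fun z => ∑ i ∈ s, P i z) := by
  classical
  induction s using Finset.induction_on with
  | empty => simpa using isSepAffine_const 0
  | insert a s ha ih =>
    simp only [Finset.sum_insert ha]
    exact (hP a (Finset.mem_insert_self a s)).add
      (ih fun i hi => hP i (Finset.mem_insert_of_mem hi))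

/-- The vectors `z j`, `j ∈ s`, are chosen successively while all other coordinates are equal to `x`.
Each step involves only finitely many functionals, the linear parts of `Q i` in the coordinate
being changed. -/
lemma exists_sequence_s12 {G : X →L[ℝ] Y} (hG : ‖G‖ = 1) (hDC : IsDaugavetCenter G)
    {m : ℕ} {ι : Type*} [Fintype ι] {Q : ι → (Fin m → X) → ℝ} (hQ : ∀ i, IsSepAffine (Q i))
    {x : X} (hx : ‖x‖ ≤ 1) (v : Y) (s : Finset (Fin m)) {η : ℝ} (hη : 0 < η) :
    ∃ z : Fin m → X, (∀ j, ‖z j‖ ≤ 1) ∧ (∀ j ∉ s, z j = x) ∧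
      ‖v‖ + s.card - η ≤ ‖v + ∑ j ∈ s, G (z j)‖ ∧ ∀ i, |Q i z - Q i (fun _ => x)| ≤ η := by
  classical
  induction s using Finset.induction_on generalizing η with
  | empty => exact ⟨fun _ => x, fun _ => hx, fun _ _ => rfl, by simp [hη.le], by simp [hη.le]⟩
  | insert a s ha ih =>
    obtain ⟨z, hz, hzx, hGz, hQz⟩ := ih (half_pos hη)
    choose φ c hφ using fun i => hQ i z a
    obtain ⟨u, hu, hGu, hφu⟩ :=
      exists_weak_near hG hDC φ hx (v + ∑ j ∈ s, G (z j)) (half_pos hη)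
    refine ⟨Function.update z a u, fun j => ?_, fun j hj => ?_, ?_, fun i => ?_⟩
    · rcases eq_or_ne j a with rfl | h
      · simpa using hu
      · simpa [h] using hz j
    · have h := Finset.mem_insert.not.1 hj
      push Not at h
      simpa [h.1] using hzx j h.2
    · rw [Finset.sum_insert ha, Finset.card_insert_of_notMem ha, Function.update_self,
        Finset.sum_congr rfl (g := fun j => G (z j)) fun j hj => by
          rw [Function.update_of_ne (ne_of_mem_of_not_mem hj ha)],
        add_comm (G u), ← add_assoc]
      push_cast
      linarith
    · have h1 : Q i z = c i + φ i x := by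
        rw [← hφ, ← hzx a ha, Function.update_eq_self]
      have h2 := abs_sub_le (Q i (Function.update z a u)) (Q i z) (Q i fun _ => x)
      have h3 : Q i (Function.update z a u) - Q i z = φ i u - φ i x := by
        rw [hφ, h1]; ring
      rw [h3] at h2
      linarith [hφu i, hQz i]

/-- The contribution of the pairwise distinct indices to `F (w, …, w)`, where `w` is the mean of the
`z j`. -/
noncomputable def offDiag {n : ℕ} (F : ContinuousMultilinearMap ℝ (fun _ : Fin n => X) ℝ)
    (m : ℕ) (z : Fin m → X) : ℝ :=
  ((m : ℝ) ^ n)⁻¹ * ∑ σ : Fin n ↪ Fin m, F (fun t => z (σ t))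

/-- An injective `σ` takes the value `j` at most once, so `z j` occurs at most once in each term. -/
lemma isSepAffine_offDiag {n : ℕ} (F : ContinuousMultilinearMap ℝ (fun _ : Fin n => X) ℝ)
    (m : ℕ) : IsSepAffine (offDiag F m) := by
  refine (isSepAffine_sum _ fun σ _ z j => ?_).const_mul _
  by_cases hj : ∃ t, σ t = j
  · obtain ⟨t, rfl⟩ := hj
    refine ⟨F.toContinuousLinearMap (fun t => z (σ t)) t, 0, fun u => ?_⟩
    rw [zero_add]
    exact congrArg F (Function.update_comp_eq_of_injective z σ.injective t u)
  · refine ⟨0, F (fun t => z (σ t)), fun u => ?_⟩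
    simp only [zero_apply, add_zero]
    exact congrArg F (Function.update_comp_eq_of_notMem_range z u (by simpa using hj))

/-- The error consists of the non-injective index tuples, each contributing at most `‖F‖`. -/
lemma abs_apply_mean_sub_offDiag_le {n : ℕ}
    (F : ContinuousMultilinearMap ℝ (fun _ : Fin n => X) ℝ) {m : ℕ} (hm : 0 < m)
    {z : Fin m → X} (hz : ∀ j, ‖z j‖ ≤ 1) :
    |F (fun _ => (m : ℝ)⁻¹ • ∑ j, z j) - offDiag F m z| ≤
      (1 - (m.descFactorial n : ℝ) / (m : ℝ) ^ n) * ‖F‖ := by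
  classical
  have hmn : (0 : ℝ) < (m : ℝ) ^ n := by positivity
  have hexp : F (fun _ => (m : ℝ)⁻¹ • ∑ j, z j) =
      ((m : ℝ) ^ n)⁻¹ * ∑ σ : Fin n → Fin m, F (fun t => z (σ t)) := by
    rw [F.map_smul_univ (fun _ => (m : ℝ)⁻¹) (fun _ => ∑ j, z j), F.map_sum]
    simp
  let I : Finset (Fin n → Fin m) := Finset.univ.map ⟨fun σ : Fin n ↪ Fin m => ⇑σ,
    DFunLike.coe_injective⟩
  have hI : ∑ σ : Fin n ↪ Fin m, F (fun t => z (σ t)) = ∑ σ ∈ I, F (fun t => z (σ t)) := by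
    rw [Finset.sum_map]; rfl
  have hcard : ((Iᶜ).card : ℝ) = (m : ℝ) ^ n - m.descFactorial n := by
    rw [Finset.card_compl, Nat.cast_sub (Finset.card_le_univ I)]
    simp [I, Fintype.card_embedding_eq]
  rw [hexp, offDiag, hI, ← mul_sub, ← Finset.sum_add_sum_compl I, add_sub_cancel_left, abs_mul,
    abs_of_pos (inv_pos.2 hmn)]
  have hsum : |∑ σ ∈ Iᶜ, F (fun t => z (σ t))| ≤ ((m : ℝ) ^ n - m.descFactorial n) * ‖F‖ := by
    rw [← hcard, ← nsmul_eq_mul]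
    refine (Finset.abs_sum_le_sum_abs _ _).trans (Finset.sum_le_card_nsmul _ _ _ fun σ _ => ?_)
    simpa using F.le_opNorm_mul_prod_of_le (b := fun _ => 1) (fun t => hz (σ t))
  calc ((m : ℝ) ^ n)⁻¹ * |∑ σ ∈ Iᶜ, F (fun t => z (σ t))|
      ≤ ((m : ℝ) ^ n)⁻¹ * (((m : ℝ) ^ n - m.descFactorial n) * ‖F‖) := by gcongr
    _ = (1 - (m.descFactorial n : ℝ) / (m : ℝ) ^ n) * ‖F‖ := by field_simp

lemma tendsto_descFactorial_div_pow (n : ℕ) :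
    Filter.Tendsto (fun m : ℕ => (m.descFactorial n : ℝ) / (m : ℝ) ^ n) Filter.atTop (nhds 1) := by
  refine (Asymptotics.isEquivalent_iff_tendsto_one ?_).1 (isEquivalent_descFactorial n)
  filter_upwards [Filter.eventually_gt_atTop 0] with m hm
  positivity

/-- On means of `m` vectors of the unit ball, a scalar polynomial is uniformly approximated by a
separately affine function, for all large `m`. -/
lemma IsScalarPoly.exists_isSepAffine {p : X → ℝ} (hp : IsScalarPoly p) {δ : ℝ} (hδ : 0 < δ) :
    ∀ᶠ m : ℕ in Filter.atTop, ∃ Q : (Fin m → X) → ℝ, IsSepAffine Q ∧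
      ∀ z : Fin m → X, (∀ j, ‖z j‖ ≤ 1) → |p ((m : ℝ)⁻¹ • ∑ j, z j) - Q z| < δ := by
  obtain ⟨N, c, F, hF⟩ := hp
  have hlim : Filter.Tendsto (fun m : ℕ => ∑ n ∈ Finset.Icc 1 N,
      (1 - (m.descFactorial n : ℝ) / (m : ℝ) ^ n) * ‖F n‖) Filter.atTop (nhds 0) := by
    have := tendsto_finsetSum (Finset.Icc 1 N) fun n _ =>
      ((tendsto_descFactorial_div_pow n).const_sub 1).mul_const ‖F n‖
    simpa using this
  filter_upwards [hlim.eventually_lt_const hδ, Filter.eventually_gt_atTop 0] with m hlt hm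
  refine ⟨fun z => c + ∑ n ∈ Finset.Icc 1 N, offDiag (F n) m z,
    (isSepAffine_const c).add (isSepAffine_sum _ fun n _ => isSepAffine_offDiag (F n) m),
    fun z hz => ?_⟩
  rw [hF, add_sub_add_left_eq_sub, ← Finset.sum_sub_distrib]
  refine ((Finset.abs_sum_le_sum_abs _ _).trans (Finset.sum_le_sum fun n _ => ?_)).trans_lt hlt
  exact abs_apply_mean_sub_offDiag_le (F n) hm hz
end

/-- if `G : X → Y` is a norm-one Daugavet center, then for every `x ∈ B_X`,
`y ∈ S_Y` and `ε > 0`, the set `{z ∈ B_X : ‖y + G z‖ > 2 - ε}` is dense in `B_X` for the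
weak polynomial topology. -/
theorem polynomial_shvidkoy_for_daugavet_centers
    {X Y : Type*} [NormedAddCommGroup X] [NormedSpace ℝ X] [CompleteSpace X]
    [NormedAddCommGroup Y] [NormedSpace ℝ Y] [CompleteSpace Y]
    (G : X →L[ℝ] Y) (hG : ‖G‖ = 1)
    (hDC : ∀ (f : X →L[ℝ] ℝ) (y₀ : Y), ‖G + f.smulRight y₀‖ = 1 + ‖f‖ * ‖y₀‖) :
    ∀ (x : X), ‖x‖ ≤ 1 → ∀ (y : Y), ‖y‖ = 1 → ∀ ε > (0 : ℝ),
      ∀ (k : ℕ) (p : Fin k → (X → ℝ)), (∀ i, IsScalarPoly (p i)) →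
        ∀ δ > (0 : ℝ),
          ∃ z : X, ‖z‖ ≤ 1 ∧ ‖y + G z‖ > 2 - ε ∧
            ∀ i : Fin k, |p i z - p i x| < δ := by
  intro x hx y hy ε hε k p hp δ hδ
  obtain ⟨m, hm, hex⟩ := ((Filter.eventually_gt_atTop 0).and (Filter.eventually_all.2 fun i =>
    (hp i).exists_isSepAffine (show 0 < δ / 3 by positivity))).exists
  choose Q hQ hpQ using hex
  have hm1 : (1 : ℝ) ≤ m := by exact_mod_cast hm
  have hm0 : (m : ℝ) ≠ 0 := by positivity
  -- Starting from `m • y`, whose norm is that of a sum of `m` unit vectors, the lower bound survives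
  -- the division by `m`.
  obtain ⟨z, hz, -, hGz, hQz⟩ := exists_sequence_s12 hG hDC hQ hx ((m : ℝ) • y) Finset.univ
    (show 0 < min (ε / 2) (δ / 3) by positivity)
  refine ⟨(m : ℝ)⁻¹ • ∑ j, z j, ?_, ?_, fun i => ?_⟩
  · rw [norm_smul, norm_inv, Real.norm_natCast, inv_mul_le_one₀ (by positivity)]
    simpa using norm_sum_le_of_le Finset.univ fun j _ => hz j
  · have e : (m : ℝ) • y + ∑ j, G (z j) = (m : ℝ) • (y + G ((m : ℝ)⁻¹ • ∑ j, z j)) := by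
      rw [map_smul, map_sum, smul_add, smul_inv_smul₀ hm0]
    rw [e, norm_smul, norm_smul, hy, Real.norm_natCast, Finset.card_univ, Fintype.card_fin] at hGz
    have := min_le_left (ε / 2) (δ / 3)
    by_contra! h
    nlinarith
  · have h1 := hpQ i z hz
    -- The mean of the constant family `x` is `x`, so `Q i` also approximates `p i x`.
    have h2 := hpQ i (fun _ => x) fun _ => hx
    have h3 := hQz i
    have e : (m : ℝ)⁻¹ • ∑ _j : Fin m, x = x := by
      rw [Finset.sum_const, Finset.card_univ, Fintype.card_fin, ← Nat.cast_smul_eq_nsmul ℝ,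
        inv_smul_smul₀ hm0]
    rw [e] at h2
    have h4 := min_le_right (ε / 2) (δ / 3)
    rw [abs_lt] at *
    rw [abs_le] at h3
    constructor <;> linarith
end
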